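/- Let f(x) = F₁(x') + ωF₂(x') be generalized partial-slice regular on Ω_D (f ∈ GSR(Ω_D)). Then F₁ and F₂ are real analytic on D, f is real analytic on Ω_D, and Δ_{x'}F₁ = 0 and Δ_{x'}F₂ = 0 on D, where Δ_{x'} = Δ_{x_p} + ∂_r² is the Laplacian on ℝ^{p+2}. -/

import Mathlib

open scoped BigOperators
open Filter Topology

namespace GPSM

variable (A : Type*) [NormedAddCommGroup A] [NormedSpace ℝ A] [Mul A] [One A]

/-- `A` is a real alternative algebra with unit `1`, of finite dimension `d > 1`,
equipped with an anti-involution `conj` (a real-linear map with `(a^c)^c = a`,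
`(ab)^c = b^c a^c`, fixing the reals).  The associator is alternating (left/right
alternative laws). -/
structure IsAltStarAlg (conj : A → A) : Prop where
  finDim : FiniteDimensional ℝ A
  one_lt_finrank : 1 < Module.finrank ℝ A
  mul_add' : ∀ a b c : A, a * (b + c) = a * b + a * c
  add_mul' : ∀ a b c : A, (a + b) * c = a * c + b * c
  smul_mul' : ∀ (r : ℝ) (a b : A), (r • a) * b = r • (a * b)
  mul_smul' : ∀ (r : ℝ) (a b : A), a * (r • b) = r • (a * b)
  one_mul' : ∀ a : A, 1 * a = a
  mul_one' : ∀ a : A, a * 1 = a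
  alt_left : ∀ a b : A, a * (a * b) = a * a * b
  alt_right : ∀ a b : A, a * b * b = a * (b * b)
  conj_add : ∀ a b : A, conj (a + b) = conj a + conj b
  conj_smul : ∀ (r : ℝ) (a : A), conj (r • a) = r • conj a
  conj_conj : ∀ a : A, conj (conj a) = a
  conj_mul : ∀ a b : A, conj (a * b) = conj b * conj a
  conj_one : conj 1 = 1

/-- `v 0, v 1, …, v m` is a hypercomplex basis of the hypercomplex subspace
`M = span(v 0, …, v m)` of `A`: `v 0 = 1`, `t(v s) = 0`, `n(v s) = 1`, the `v s`
anticommute for distinct `s, t ∈ {1,…,m}`, they are linearly independent, and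
`M` is contained in the quadratic cone `Q_A`. -/
structure IsHypBasis (conj : A → A) (v : ℕ → A) (m : ℕ) : Prop where
  v_zero : v 0 = 1
  trace_zero : ∀ s, 1 ≤ s → s ≤ m → v s + conj (v s) = 0
  norm_one : ∀ s, 1 ≤ s → s ≤ m → v s * conj (v s) = 1
  anticomm : ∀ s t, 1 ≤ s → s ≤ m → 1 ≤ t → t ≤ m → s ≠ t → v s * v t = -(v t * v s)
  indep : LinearIndependent ℝ (fun i : Fin (m + 1) => v i)
  mem_cone : ∀ x ∈ Submodule.span ℝ (Set.range fun i : Fin (m + 1) => v (i : ℕ)),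
      ∃ tr nr : ℝ, x + conj x = tr • (1 : A) ∧ x * conj x = nr • (1 : A) ∧
        ((∃ r : ℝ, x = r • (1 : A)) ∨ tr ^ 2 < 4 * nr)

variable {A}

/-- Identification of `ℝ^{m+1}` with the hypercomplex subspace `M`:
`(x_0,…,x_m) ↦ Σ x_s • v s`. -/
def emb (v : ℕ → A) (m : ℕ) (x : Fin (m + 1) → ℝ) : A :=
  ∑ s : Fin (m + 1), x s • v (s : ℕ)

/-- First `p+1` coordinates of a point of `M ≅ ℝ^{m+1}`, i.e. the `x_p`-part. -/
def projP (m p : ℕ) (x : Fin (m + 1) → ℝ) : Fin (p + 1) → ℝ := fun s =>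
  if h : (s : ℕ) < m + 1 then x ⟨(s : ℕ), h⟩ else 0

/-- Inclusion `ℝ^{p+1} ⊆ ℝ^{m+1}` (remaining coordinates `0`). -/
def injP (m p : ℕ) (y : Fin (p + 1) → ℝ) : Fin (m + 1) → ℝ := fun s =>
  if h : (s : ℕ) < p + 1 then y ⟨(s : ℕ), h⟩ else 0

/-- The coordinates of `x_q` (last `q = m - p` coordinates of `x`). -/
def xqpart (m p : ℕ) (x : Fin (m + 1) → ℝ) : Fin (m + 1) → ℝ := fun s =>
  if (s : ℕ) ≤ p then 0 else x s

/-- The coordinates of `x_p` inside `ℝ^{m+1}`. -/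
def xppart (m p : ℕ) (x : Fin (m + 1) → ℝ) : Fin (m + 1) → ℝ := fun s =>
  if (s : ℕ) ≤ p then x s else 0

/-- `r = |x_q|`. -/
noncomputable def rad (m p : ℕ) (x : Fin (m + 1) → ℝ) : ℝ :=
  Real.sqrt (∑ s : Fin (m + 1), (xqpart m p x s) ^ 2)

/-- `ω = x_q / |x_q|` (coordinates), `0` when `x_q = 0`. -/
noncomputable def normq (m p : ℕ) (x : Fin (m + 1) → ℝ) : Fin (m + 1) → ℝ :=
  (rad m p x)⁻¹ • xqpart m p x

/-- The reflection `x = x_p + x_q ↦ x_⋄ = x_p - x_q`. -/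
def reflP (m p : ℕ) (x : Fin (m + 1) → ℝ) : Fin (m + 1) → ℝ := fun s =>
  if (s : ℕ) ≤ p then x s else -x s

/-- The sphere `𝕊 = {x_q ∈ span(v_{p+1},…,v_m) : x_q² = -1}`, in coordinates. -/
def Sph (v : ℕ → A) (m p : ℕ) : Set (Fin (m + 1) → ℝ) :=
  {w | (∀ s : Fin (m + 1), (s : ℕ) ≤ p → w s = 0) ∧ emb v m w * emb v m w = -1}

/-- The point `x_p + r ω` of `M ≅ ℝ^{m+1}`. -/
def pt (m p : ℕ) (w : Fin (m + 1) → ℝ) (y : Fin (p + 1) → ℝ) (r : ℝ) :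
    Fin (m + 1) → ℝ :=
  injP m p y + r • w

/-- The slice `Ω_ω ⊆ ℝ^{p+2}` of `Ω` at `ω`. -/
def sliceSet (m p : ℕ) (Ω : Set (Fin (m + 1) → ℝ)) (w : Fin (m + 1) → ℝ) :
    Set ((Fin (p + 1) → ℝ) × ℝ) := {z | pt m p w z.1 z.2 ∈ Ω}

/-- The restriction `f_ω` of `f` to the slice at `ω`, as a function on `ℝ^{p+2}`. -/
def sliceFun (m p : ℕ) (f : (Fin (m + 1) → ℝ) → A) (w : Fin (m + 1) → ℝ) :
    (Fin (p + 1) → ℝ) × ℝ → A := fun z => f (pt m p w z.1 z.2)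

/-- Partial derivative `∂_{x_s}` of a function on `ℝ^{m+1}`. -/
noncomputable def pdF (m : ℕ) (s : Fin (m + 1)) (f : (Fin (m + 1) → ℝ) → A)
    (x : Fin (m + 1) → ℝ) : A := fderiv ℝ f x (Pi.single s 1)

/-- Partial derivative `∂_{x_s}` of a function on `ℝ^{p+1}`. -/
noncomputable def pdP (p : ℕ) (s : Fin (p + 1)) (g : (Fin (p + 1) → ℝ) → A)
    (y : Fin (p + 1) → ℝ) : A := fderiv ℝ g y (Pi.single s 1)

/-- Partial derivative `∂_{x_s}` of a function on `ℝ^{p+2} = ℝ^{p+1} × ℝ`. -/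
noncomputable def pdSx (p : ℕ) (s : Fin (p + 1)) (G : (Fin (p + 1) → ℝ) × ℝ → A)
    (z : (Fin (p + 1) → ℝ) × ℝ) : A := fderiv ℝ G z (Pi.single s 1, 0)

/-- Partial derivative `∂_r` of a function on `ℝ^{p+2} = ℝ^{p+1} × ℝ`. -/
noncomputable def pdSr (p : ℕ) (G : (Fin (p + 1) → ℝ) × ℝ → A)
    (z : (Fin (p + 1) → ℝ) × ℝ) : A := fderiv ℝ G z (0, 1)

/-- Second partial derivative `∂_r²`. -/
noncomputable def pdSr2 (p : ℕ) (G : (Fin (p + 1) → ℝ) × ℝ → A)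
    (z : (Fin (p + 1) → ℝ) × ℝ) : A := pdSr p (pdSr p G) z

/-- The operator `Σ_{lo ≤ s ≤ hi} v_s ∂_{x_s}` on functions on `ℝ^{m+1}`.
`Dop v m 0 p` is `D_{x_p}`, `Dop v m (p+1) m` is `D_{x_q}`, `Dop v m 0 m` is `D_x`. -/
noncomputable def Dop (v : ℕ → A) (m lo hi : ℕ) (f : (Fin (m + 1) → ℝ) → A)
    (x : Fin (m + 1) → ℝ) : A :=
  ∑ s : Fin (m + 1), if lo ≤ (s : ℕ) ∧ (s : ℕ) ≤ hi then v (s : ℕ) * pdF m s f x else 0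

/-- The conjugate operator `∂_{x_0} - Σ_{1 ≤ s ≤ hi} v_s ∂_{x_s}` on functions on
`ℝ^{m+1}`; `Dbarop v m p` is `D̄_{x_p}`, `Dbarop v m m` is `D̄_x`. -/
noncomputable def Dbarop (v : ℕ → A) (m hi : ℕ) (f : (Fin (m + 1) → ℝ) → A)
    (x : Fin (m + 1) → ℝ) : A :=
  pdF m 0 f x -
    ∑ s : Fin (m + 1), if 1 ≤ (s : ℕ) ∧ (s : ℕ) ≤ hi then v (s : ℕ) * pdF m s f x else 0

/-- The operator `D_{x_p} = Σ_{s=0}^p v_s ∂_{x_s}` on functions on `ℝ^{p+1}`. -/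
noncomputable def DopP (v : ℕ → A) (p : ℕ) (g : (Fin (p + 1) → ℝ) → A)
    (y : Fin (p + 1) → ℝ) : A :=
  ∑ s : Fin (p + 1), v (s : ℕ) * pdP p s g y

/-- The operator `D̄_{x_p} = ∂_{x_0} - Σ_{s=1}^p v_s ∂_{x_s}` on functions on `ℝ^{p+1}`. -/
noncomputable def DbaropP (v : ℕ → A) (p : ℕ) (g : (Fin (p + 1) → ℝ) → A)
    (y : Fin (p + 1) → ℝ) : A :=
  pdP p 0 g y - ∑ s : Fin (p + 1), if 1 ≤ (s : ℕ) then v (s : ℕ) * pdP p s g y else 0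

/-- The operator `D_{x_p}` on functions on `ℝ^{p+2} = ℝ^{p+1} × ℝ`. -/
noncomputable def DopSx (v : ℕ → A) (p : ℕ) (G : (Fin (p + 1) → ℝ) × ℝ → A)
    (z : (Fin (p + 1) → ℝ) × ℝ) : A :=
  ∑ s : Fin (p + 1), v (s : ℕ) * pdSx p s G z

/-- The operator `D̄_{x_p}` on functions on `ℝ^{p+2} = ℝ^{p+1} × ℝ`. -/
noncomputable def DbaropSx (v : ℕ → A) (p : ℕ) (G : (Fin (p + 1) → ℝ) × ℝ → A)
    (z : (Fin (p + 1) → ℝ) × ℝ) : A :=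
  pdSx p 0 G z - ∑ s : Fin (p + 1), if 1 ≤ (s : ℕ) then v (s : ℕ) * pdSx p s G z else 0

/-- The Laplacian `Δ_x` on functions on `ℝ^{m+1}`. -/
noncomputable def lapF (m : ℕ) (f : (Fin (m + 1) → ℝ) → A)
    (x : Fin (m + 1) → ℝ) : A :=
  ∑ s : Fin (m + 1), pdF m s (pdF m s f) x

/-- The Laplacian `Δ_{x_p}` on functions on `ℝ^{p+1}`. -/
noncomputable def lapP (p : ℕ) (g : (Fin (p + 1) → ℝ) → A)
    (y : Fin (p + 1) → ℝ) : A :=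
  ∑ s : Fin (p + 1), pdP p s (pdP p s g) y

/-- Iterated Laplacian `Δ_x^k`. -/
noncomputable def lapIterF (m k : ℕ) (f : (Fin (m + 1) → ℝ) → A) :
    (Fin (m + 1) → ℝ) → A :=
  (fun g => lapF m g)^[k] f

/-- Iterated Laplacian `Δ_{x_p}^k`. -/
noncomputable def lapIterP (p k : ℕ) (g : (Fin (p + 1) → ℝ) → A) :
    (Fin (p + 1) → ℝ) → A :=
  (fun h => lapP p h)^[k] g

/-- The Laplacian `Δ_{x'} = Δ_{x_p} + ∂_r²` on functions on `ℝ^{p+2}`. -/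
noncomputable def lapSx (p : ℕ) (G : (Fin (p + 1) → ℝ) × ℝ → A)
    (z : (Fin (p + 1) → ℝ) × ℝ) : A :=
  (∑ s : Fin (p + 1), pdSx p s (pdSx p s G) z) + pdSr2 p G z

/-- The slice Cauchy-Riemann operator `D_ω = D_{x_p} + ω ∂_r` applied to a function
on `ℝ^{p+2}`, where `ω` is given in coordinates by `w`. -/
noncomputable def DomCR (v : ℕ → A) (m p : ℕ) (w : Fin (m + 1) → ℝ)
    (G : (Fin (p + 1) → ℝ) × ℝ → A) (z : (Fin (p + 1) → ℝ) × ℝ) : A :=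
  DopSx v p G z + emb v m w * pdSr p G z

/-- `f` is left generalized partial-slice monogenic (of type `(p, m-p)`) on `Ω`. -/
def GSM (v : ℕ → A) (m p : ℕ) (f : (Fin (m + 1) → ℝ) → A)
    (Ω : Set (Fin (m + 1) → ℝ)) : Prop :=
  ∀ w ∈ Sph v m p, ContDiffOn ℝ 1 (sliceFun m p f w) (sliceSet m p Ω w) ∧
    ∀ z ∈ sliceSet m p Ω w, DomCR v m p w (sliceFun m p f w) z = 0

/-- `Ω` is partially symmetric with respect to `ℝ^{p+1}`. -/
def PSym (v : ℕ → A) (m p : ℕ) (Ω : Set (Fin (m + 1) → ℝ)) : Prop :=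
  ∀ x ∈ Ω, ∀ w ∈ Sph v m p, xppart m p x + rad m p x • w ∈ Ω

/-- `Ω` is a slice domain: a domain meeting `ℝ^{p+1}` all of whose slices are
domains in `ℝ^{p+2}`. -/
def SliceDomain (v : ℕ → A) (m p : ℕ) (Ω : Set (Fin (m + 1) → ℝ)) : Prop :=
  IsOpen Ω ∧ IsConnected Ω ∧ (∃ x ∈ Ω, xqpart m p x = 0) ∧
    ∀ w ∈ Sph v m p, IsConnected (sliceSet m p Ω w)

/-- The reflection `(x_p, r) ↦ (x_p, -r)` of `ℝ^{p+2}`. -/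
def reflD (p : ℕ) (z : (Fin (p + 1) → ℝ) × ℝ) : (Fin (p + 1) → ℝ) × ℝ := (z.1, -z.2)

/-- The p-symmetric completion `Ω_D ⊆ M` of `D ⊆ ℝ^{p+2}`. -/
def OmegaD (v : ℕ → A) (m p : ℕ) (D : Set ((Fin (p + 1) → ℝ) × ℝ)) :
    Set (Fin (m + 1) → ℝ) :=
  {x | ∃ w ∈ Sph v m p, ∃ z ∈ D, x = pt m p w z.1 z.2}

/-- `(F₁, F₂)` satisfies the even-odd (stem function) conditions on `D`. -/
def IsStem (p : ℕ) (D : Set ((Fin (p + 1) → ℝ) × ℝ))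
    (F₁ F₂ : (Fin (p + 1) → ℝ) × ℝ → A) : Prop :=
  ∀ z ∈ D, F₁ (reflD p z) = F₁ z ∧ F₂ (reflD p z) = -F₂ z

/-- `f` is the generalized partial-slice function induced by the stem `(F₁, F₂)`:
`f(x_p + rω) = F₁(x_p, r) + ω F₂(x_p, r)`. -/
def Induced (v : ℕ → A) (m p : ℕ) (D : Set ((Fin (p + 1) → ℝ) × ℝ))
    (F₁ F₂ : (Fin (p + 1) → ℝ) × ℝ → A) (f : (Fin (m + 1) → ℝ) → A) : Prop :=
  ∀ w ∈ Sph v m p, ∀ z ∈ D, f (pt m p w z.1 z.2) = F₁ z + emb v m w * F₂ z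

/-- The generalized Cauchy-Riemann system for the stem `(F₁, F₂)` on `D`. -/
def StemCR (v : ℕ → A) (p : ℕ) (D : Set ((Fin (p + 1) → ℝ) × ℝ))
    (F₁ F₂ : (Fin (p + 1) → ℝ) × ℝ → A) : Prop :=
  ∀ z ∈ D, DopSx v p F₁ z - pdSr p F₂ z = 0 ∧ DbaropSx v p F₂ z + pdSr p F₁ z = 0

/-- `f` is generalized partial-slice regular on `Ω_D`. -/
def MemGSR (v : ℕ → A) (m p : ℕ) (D : Set ((Fin (p + 1) → ℝ) × ℝ))
    (f : (Fin (m + 1) → ℝ) → A) : Prop :=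
  ∃ F₁ F₂ : (Fin (p + 1) → ℝ) × ℝ → A, IsStem p D F₁ F₂ ∧
    ContDiffOn ℝ 1 F₁ D ∧ ContDiffOn ℝ 1 F₂ D ∧
    Induced v m p D F₁ F₂ f ∧ StemCR v p D F₁ F₂

/-- `f` is a generalized partial-slice function on `Ω`. -/
def MemGS (v : ℕ → A) (m p : ℕ) (Ω : Set (Fin (m + 1) → ℝ))
    (f : (Fin (m + 1) → ℝ) → A) : Prop :=
  ∃ F₁ F₂ : (Fin (p + 1) → ℝ) × ℝ → A,
    (∀ z : (Fin (p + 1) → ℝ) × ℝ, F₁ (reflD p z) = F₁ z ∧ F₂ (reflD p z) = -F₂ z) ∧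
    ∀ x ∈ Ω, f x = F₁ (projP m p x, rad m p x) +
      emb v m (normq m p x) * F₂ (projP m p x, rad m p x)

/-- Non-associative power: `a^n` with products taken from the right. -/
def apow (a : A) (n : ℕ) : A := (fun b => a * b)^[n] 1

/-- Partial even part `PE[f](x) = (f(x) + f(x_⋄))/2`. -/
noncomputable def PE (m p : ℕ) (f : (Fin (m + 1) → ℝ) → A)
    (x : Fin (m + 1) → ℝ) : A := (2 : ℝ)⁻¹ • (f x + f (reflP m p x))

/-- Partial odd part `PO[f](x) = (f(x) - f(x_⋄))/2`. -/
noncomputable def PO (m p : ℕ) (f : (Fin (m + 1) → ℝ) → A)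
    (x : Fin (m + 1) → ℝ) : A := (2 : ℝ)⁻¹ • (f x - f (reflP m p x))

/-- `Ω₀* = {x_p + x_q : x_p ∈ Ω₀, x_q ∈ ℝ^q}`. -/
def Omega0star (m p : ℕ) (Ω₀ : Set (Fin (p + 1) → ℝ)) : Set (Fin (m + 1) → ℝ) :=
  {x | projP m p x ∈ Ω₀}

/-- The spherical derivative `f'_s(x) = (1/2) x_q⁻¹ (f(x) - f(x_⋄))`
(using `x_q⁻¹ = -x_q/|x_q|²`). -/
noncomputable def sder (v : ℕ → A) (m p : ℕ) (f : (Fin (m + 1) → ℝ) → A)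
    (x : Fin (m + 1) → ℝ) : A :=
  -(((2 : ℝ) * rad m p x ^ 2)⁻¹) • (emb v m (xqpart m p x) * (f x - f (reflP m p x)))

/-- The spherical Dirac operator
`Γ f = -(1/2) Σ_{p+1 ≤ i,j ≤ m} v_i (v_j (L_{ij} f))`. -/
noncomputable def sphericalGamma (v : ℕ → A) (m p : ℕ) (f : (Fin (m + 1) → ℝ) → A)
    (x : Fin (m + 1) → ℝ) : A :=
  -((2 : ℝ)⁻¹) • ∑ i : Fin (m + 1), ∑ j : Fin (m + 1),
    if p < (i : ℕ) ∧ p < (j : ℕ) then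
      v (i : ℕ) * (v (j : ℕ) * (x i • pdF m j f x - x j • pdF m i f x)) else 0

/-- The slice Cauchy-Riemann operator `D_ω` applied to (the slice restriction of) a
function `f` on `M`, at the point `x` (with `ω = x_q/|x_q|`). -/
noncomputable def DomCRat (v : ℕ → A) (m p : ℕ) (f : (Fin (m + 1) → ℝ) → A)
    (x : Fin (m + 1) → ℝ) : A :=
  DomCR v m p (normq m p x) (sliceFun m p f (normq m p x)) (projP m p x, rad m p x)

/-- `f` is left monogenic on `Ω`: `f ∈ C¹` and `D_x f = 0`. -/
def Monogenic (v : ℕ → A) (m : ℕ) (f : (Fin (m + 1) → ℝ) → A)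
    (Ω : Set (Fin (m + 1) → ℝ)) : Prop :=
  ContDiffOn ℝ 1 f Ω ∧ ∀ x ∈ Ω, Dop v m 0 m f x = 0

/-- `f` is harmonic on `Ω`: `f ∈ C²` and `Δ_x f = 0`. -/
def Harmonic (m : ℕ) (f : (Fin (m + 1) → ℝ) → A)
    (Ω : Set (Fin (m + 1) → ℝ)) : Prop :=
  ContDiffOn ℝ 2 f Ω ∧ ∀ x ∈ Ω, lapF m f x = 0

/-- A family of functions converges normally (locally a summable uniform bound). -/
def NormallyConvOn {E F : Type*} [TopologicalSpace E] [NormedAddCommGroup F]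
    (u : ℕ → E → F) (s : Set E) : Prop :=
  ∀ x ∈ s, ∃ U ∈ nhds x, ∃ c : ℕ → ℝ, Summable c ∧ ∀ k : ℕ, ∀ y ∈ U, ‖u k y‖ ≤ c k

/-- The generalized partial-slice CK-extension
`CK[f₀](x) = Σ_k (r^{2k}/(2k)!)(-Δ_{x_p})^k f₀(x_p)
  + ω Σ_k (r^{2k+1}/(2k+1)!)(-Δ_{x_p})^k (D_{x_p} f₀)(x_p)`. -/
noncomputable def CKe (v : ℕ → A) (m p : ℕ) (f₀ : (Fin (p + 1) → ℝ) → A)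
    (x : Fin (m + 1) → ℝ) : A :=
  (∑' k : ℕ, (((-1 : ℝ) ^ k * rad m p x ^ (2 * k)) / (2 * k).factorial) •
      lapIterP p k f₀ (projP m p x)) +
  emb v m (normq m p x) *
    ∑' k : ℕ, (((-1 : ℝ) ^ k * rad m p x ^ (2 * k + 1)) / (2 * k + 1).factorial) •
      lapIterP p k (DopP v p f₀) (projP m p x)

/-- The coefficient `Γ(q/2)(-1)^k r^{2k} / (2^{2k} k! Γ(k + q/2))`. -/
noncomputable def hgckC (q k : ℕ) (r : ℝ) : ℝ :=
  (Real.Gamma ((q : ℝ) / 2) * (-1) ^ k * r ^ (2 * k)) /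
    (2 ^ (2 * k) * (k.factorial : ℝ) * Real.Gamma ((k : ℝ) + (q : ℝ) / 2))

/-- The coefficient `Γ(q/2)(-1)^k r^{2k} / (2^{2k+1} k! Γ(k + q/2 + 1))`. -/
noncomputable def gckC' (q k : ℕ) (r : ℝ) : ℝ :=
  (Real.Gamma ((q : ℝ) / 2) * (-1) ^ k * r ^ (2 * k)) /
    (2 ^ (2 * k + 1) * (k.factorial : ℝ) * Real.Gamma ((k : ℝ) + (q : ℝ) / 2 + 1))

/-- The coefficient `Γ(q/2 + 1)(-1)^k r^{2k} / (2^{2k} k! Γ(k + q/2 + 1))`. -/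
noncomputable def hgckC' (q k : ℕ) (r : ℝ) : ℝ :=
  (Real.Gamma ((q : ℝ) / 2 + 1) * (-1) ^ k * r ^ (2 * k)) /
    (2 ^ (2 * k) * (k.factorial : ℝ) * Real.Gamma ((k : ℝ) + (q : ℝ) / 2 + 1))

/-- The monogenic generalized CK-extension `GCK[A₀]`. -/
noncomputable def GCKe (v : ℕ → A) (m p : ℕ) (A₀ : (Fin (p + 1) → ℝ) → A)
    (x : Fin (m + 1) → ℝ) : A :=
  (∑' k : ℕ, hgckC (m - p) k (rad m p x) • lapIterP p k A₀ (projP m p x)) +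
  emb v m (xqpart m p x) *
    ∑' k : ℕ, gckC' (m - p) k (rad m p x) • lapIterP p k (DopP v p A₀) (projP m p x)

/-- The harmonic generalized CK-extension `HGCK[A₀, A₁]`. -/
noncomputable def HGCKe (v : ℕ → A) (m p : ℕ) (A₀ A₁ : (Fin (p + 1) → ℝ) → A)
    (x : Fin (m + 1) → ℝ) : A :=
  (∑' k : ℕ, hgckC (m - p) k (rad m p x) • lapIterP p k A₀ (projP m p x)) +
  emb v m (xqpart m p x) *
    ∑' k : ℕ, hgckC' (m - p) k (rad m p x) • lapIterP p k A₁ (projP m p x)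

/-- The operator `(1/r)∂_r`, extended to `r = 0` by its limit `∂_r²` (on even
functions). -/
noncomputable def T1 (p : ℕ) (G : (Fin (p + 1) → ℝ) × ℝ → A) :
    (Fin (p + 1) → ℝ) × ℝ → A := fun z =>
  if z.2 = 0 then pdSr2 p G z else (z.2)⁻¹ • pdSr p G z

/-- The operator `∂_r ∘ (1/r)`, extended to `r = 0` by its limit `(1/2)∂_r²` (on odd
functions). -/
noncomputable def T2 (p : ℕ) (G : (Fin (p + 1) → ℝ) × ℝ → A) :
    (Fin (p + 1) → ℝ) × ℝ → A := fun z =>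
  if z.2 = 0 then (2 : ℝ)⁻¹ • pdSr2 p G z
  else fderiv ℝ (fun t : ℝ => t⁻¹ • G (z.1, t)) z.2 1

/-- `C_q(k) = (q-1)(q-3)⋯(q-2k+1)`, `C_q(0) = 1`. -/
noncomputable def cq (q k : ℕ) : ℝ :=
  ∏ i ∈ Finset.range k, ((q : ℝ) - (2 * (i : ℝ) + 1))

/-- Double factorial. -/
def dfac : ℕ → ℕ
  | 0 => 1
  | 1 => 1
  | n + 2 => (n + 2) * dfac n

/-- The Fueter-Sce constant `γ_q = (-1)^{(q-1)/2} (q-1)!!/(q-2)!!`. -/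
noncomputable def gammaQ (q : ℕ) : ℝ :=
  (-1 : ℝ) ^ ((q - 1) / 2) * (dfac (q - 1) : ℝ) / (dfac (q - 2) : ℝ)


section ParamInt
open MeasureTheory Metric
open scoped NNReal ENNReal

theorem analytic_param_local {W T : Type*} [NormedAddCommGroup W] [NormedSpace ℂ W]
    [TopologicalSpace T] [SecondCountableTopology T] [MeasurableSpace T] [BorelSpace T]
    (μ : Measure T) (S : Set T) (hS : MeasurableSet S) (hμ : μ S ≠ ⊤)
    (K : W → ℂ) (w0 : W) (P : FormalMultilinearSeries ℂ W ℂ) (r : ℝ≥0) (hr : 0 < r)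
    (hK : HasFPowerSeriesOnBall K P w0 (4 * r : ℝ≥0)) (σ : T → W) (hσ : ContinuousOn σ S)
    (hσb : ∀ t ∈ S, ‖σ t‖₊ ≤ r) :
    AnalyticAt ℂ (fun w => ∫ t in S, K (w + σ t) ∂μ) w0 := by
  have hrad : ((4 * r : ℝ≥0) : ℝ≥0∞) ≤ P.radius := hK.r_le
  have h4 : (0:ℝ≥0) < 4 * r := by positivity
  have hlt : ((r : ℝ≥0∞) + r) < P.radius := by
    refine lt_of_lt_of_le ?_ hrad
    rw [← ENNReal.coe_add, ENNReal.coe_lt_coe, ← NNReal.coe_lt_coe]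
    push_cast
    have : (0:ℝ) < r := hr
    linarith
  have hlt1 : (r : ℝ≥0∞) < P.radius := lt_of_le_of_lt le_self_add hlt
  let c : ℕ → ℝ≥0 := fun k => ∑' s : Σ l : ℕ, { s : Finset (Fin (k + l)) // s.card = l },
    ‖P (k + s.1)‖₊ * r ^ s.1
  have hc : Summable (fun k => c k * r ^ k) := by
    simpa only [c, ← NNReal.tsum_mul_right] using
      (NNReal.summable_sigma.1 (P.changeOriginSeries_summable_aux₁ hlt)).2
  have hcb : ∀ t ∈ S, ∀ k, ‖P.changeOrigin (σ t) k‖₊ ≤ c k := by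
    intro t ht k
    have h1 : (‖σ t‖₊ : ℝ≥0∞) < P.radius :=
      lt_of_le_of_lt (by exact_mod_cast hσb t ht) hlt1
    refine (P.nnnorm_changeOrigin_le k h1).trans ?_
    refine Summable.tsum_le_tsum ?_ (P.changeOriginSeries_summable_aux₂ h1 k)
      (P.changeOriginSeries_summable_aux₂ hlt1 k)
    intro s
    gcongr
    exact hσb t ht
  have hcont : ∀ k, ContinuousOn (fun t => P.changeOrigin (σ t) k) S := by
    intro k
    have := (P.hasFPowerSeriesOnBall_changeOrigin k (lt_of_le_of_lt bot_le hlt1)).continuousOn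
    refine this.comp hσ ?_
    intro t ht
    rw [mem_eball_zero_iff]
    exact lt_of_le_of_lt (by rw [enorm_eq_nnnorm]; exact_mod_cast hσb t ht) hlt1
  have hfin : IsFiniteMeasure (μ.restrict S) := ⟨by simpa using hμ.lt_top⟩
  have hintg : ∀ k, Integrable (fun t => P.changeOrigin (σ t) k) (μ.restrict S) := by
    intro k
    refine Integrable.of_bound ((hcont k).aestronglyMeasurable hS) (c k : ℝ) ?_
    filter_upwards [ae_restrict_mem hS] with t ht
    exact_mod_cast hcb t ht k
  let Q : FormalMultilinearSeries ℂ W ℂ := fun k => ∫ t in S, P.changeOrigin (σ t) k ∂μ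
  have hQapp : ∀ k (y : Fin k → W), Q k y = ∫ t in S, P.changeOrigin (σ t) k y ∂μ := by
    intro k y
    exact (ContinuousMultilinearMap.apply ℂ (fun _ : Fin k => W) ℂ y).integral_comp_comm (hintg k) |>.symm
  have hQ : ∀ k, ‖Q k‖ ≤ (μ.real S) * c k := by
    intro k
    have := norm_setIntegral_le_of_norm_le_const (μ := μ) (s := S) (f := fun t => P.changeOrigin (σ t) k)
      (C := (c k : ℝ)) hμ.lt_top (fun t ht => by exact_mod_cast hcb t ht k)
    rw [mul_comm]; exact this
  refine ⟨Q, r, ?_, by exact_mod_cast hr, ?_⟩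
  · refine FormalMultilinearSeries.le_radius_of_summable_norm _ ?_
    have h2 : Summable (fun k => μ.real S * ((c k : ℝ) * (r:ℝ) ^ k)) := by
      apply Summable.mul_left
      exact_mod_cast hc
    refine Summable.of_nonneg_of_le (fun k => by positivity) (fun k => ?_) h2
    rw [← mul_assoc]
    gcongr
    exact hQ k
  · intro y hy
    have hy' : ‖y‖₊ < r := by
      rw [mem_eball_zero_iff, enorm_eq_nnnorm] at hy; exact_mod_cast hy
    simp only [hQapp]
    have key : ∀ t ∈ S, HasSum (fun k => P.changeOrigin (σ t) k fun _ => y) (K (w0 + y + σ t)) := by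
      intro t ht
      have hb := hσb t ht
      have h1 : (‖σ t‖₊ : ℝ≥0∞) < (4 * r : ℝ≥0) := by
        rw [ENNReal.coe_lt_coe]
        refine lt_of_le_of_lt hb ?_
        rw [← NNReal.coe_lt_coe]; push_cast
        have : (0:ℝ) < r := hr
        linarith
      have h2 := hK.changeOrigin h1
      have h3 := h2.hasSum (y := y) (by
        rw [mem_eball_zero_iff, enorm_eq_nnnorm, lt_tsub_iff_right]
        rw [← ENNReal.coe_add, ENNReal.coe_lt_coe, ← NNReal.coe_lt_coe]
        push_cast
        have : (‖y‖:ℝ) < r := hy'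
        have : (‖σ t‖:ℝ) ≤ r := hb
        have : (0:ℝ) < r := hr
        linarith)
      have e : w0 + y + σ t = w0 + σ t + y := by abel
      rw [e]
      exact h3
    have hb2 : ∀ k, ∀ t ∈ S, ‖P.changeOrigin (σ t) k fun _ => y‖ ≤ c k * (r:ℝ)^k := by
      intro k t ht
      refine (ContinuousMultilinearMap.le_opNorm _ _).trans ?_
      simp only [Finset.prod_const, Finset.card_univ, Fintype.card_fin]
      have h1 : ‖P.changeOrigin (σ t) k‖ ≤ c k := by exact_mod_cast hcb t ht k
      have h2 : ‖y‖ ≤ r := hy'.le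
      gcongr
    have hi2 : ∀ k, Integrable (fun t => P.changeOrigin (σ t) k fun _ => y) (μ.restrict S) := fun k =>
      (ContinuousMultilinearMap.apply ℂ (fun _ : Fin k => W) ℂ (fun _ => y)).integrable_comp (hintg k)
    have h5 : Summable (fun k => ∫ t in S, ‖P.changeOrigin (σ t) k fun _ => y‖ ∂μ) := by
      have h2 : Summable (fun k => μ.real S * ((c k : ℝ) * (r:ℝ) ^ k)) := by
        apply Summable.mul_left
        exact_mod_cast hc
      refine Summable.of_nonneg_of_le (fun k => by positivity) (fun k => ?_) h2
      have := setIntegral_mono_on (μ := μ) (hi2 k).norm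
        (integrable_const (c k * (r:ℝ)^k)) hS (hb2 k)
      simpa using this
    have h6 := hasSum_integral_of_summable_integral_norm hi2 h5
    convert h6 using 1
    refine setIntegral_congr_fun hS ?_
    intro t ht
    exact (key t ht).tsum_eq.symm

theorem analytic_param {E T' T : Type*} [NormedAddCommGroup E] [NormedSpace ℂ E]
    [NormedAddCommGroup T'] [NormedSpace ℂ T']
    [TopologicalSpace T] [T2Space T] [SecondCountableTopology T] [MeasurableSpace T] [BorelSpace T]
    (μ : Measure T) [IsFiniteMeasureOnCompacts μ] (S : Set T) (hS : IsCompact S)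
    (K : E × T' → ℂ) (x0 : E) (τ : T → T') (hτ : Continuous τ)
    (hK : ∀ t ∈ S, AnalyticAt ℂ K (x0, τ t)) :
    AnalyticAt ℂ (fun x => ∫ t in S, K (x, τ t) ∂μ) x0 := by
  have hSm : MeasurableSet S := hS.measurableSet
  have hμS : μ S ≠ ⊤ := hS.measure_ne_top
  suffices H : ∃ U : Set T, MeasurableSet U ∧ S ⊆ U ∧ ∀ s', MeasurableSet s' → s' ⊆ U →
      ((∀ᶠ x in 𝓝 x0, IntegrableOn (fun t => K (x, τ t)) (s' ∩ S) μ) ∧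
      AnalyticAt ℂ (fun x => ∫ t in s' ∩ S, K (x, τ t) ∂μ) x0) by
    obtain ⟨U, _, hSU, h⟩ := H
    simpa using (h S hSm hSU).2
  refine hS.induction_on (p := fun s => ∃ U : Set T, MeasurableSet U ∧ s ⊆ U ∧ ∀ s', MeasurableSet s' → s' ⊆ U →
      ((∀ᶠ x in 𝓝 x0, IntegrableOn (fun t => K (x, τ t)) (s' ∩ S) μ) ∧
      AnalyticAt ℂ (fun x => ∫ t in s' ∩ S, K (x, τ t) ∂μ) x0)) ?_ ?_ ?_ ?_
  · refine ⟨∅, MeasurableSet.empty, le_rfl, ?_⟩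
    intro s' _ hs'
    have : s' = ∅ := Set.subset_empty_iff.1 hs'
    subst this
    simp [analyticAt_const]
  · rintro s t hst ⟨U, h1, h2, h3⟩
    exact ⟨U, h1, hst.trans h2, h3⟩
  · rintro s t ⟨U, h1, h2, h3⟩ ⟨V, g1, g2, g3⟩
    refine ⟨U ∪ V, h1.union g1, Set.union_subset_union h2 g2, ?_⟩
    intro s' hs' hsub
    have a := h3 (s' ∩ U) (hs'.inter h1) Set.inter_subset_right
    have b := g3 (s' \ U) (hs'.diff h1) (by
      rintro x ⟨hx, hxU⟩
      exact (hsub hx).resolve_left hxU)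
    have hu : s' ∩ S = (s' ∩ U ∩ S) ∪ ((s' \ U) ∩ S) := by
      rw [← Set.union_inter_distrib_right, Set.inter_union_sdiff]
    constructor
    · filter_upwards [a.1, b.1] with x hx hx'
      rw [hu]; exact hx.union hx'
    · refine ((a.2).add (b.2)).congr ?_
      filter_upwards [a.1, b.1] with x hx hx'
      rw [hu, setIntegral_union _ ((hs'.diff h1).inter hSm) hx hx']
      · rfl
      · rw [Set.disjoint_left]
        rintro y ⟨⟨_, hy⟩, _⟩ ⟨⟨_, hy'⟩, _⟩
        exact hy' hy
  · intro t0 ht0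
    obtain ⟨P, R, hP⟩ := hK t0 ht0
    obtain ⟨r, hr, hrR⟩ : ∃ r : ℝ≥0, 0 < r ∧ ((4 * r : ℝ≥0) : ℝ≥0∞) ≤ R := by
      obtain ⟨q, hq0, hqR⟩ := ENNReal.lt_iff_exists_nnreal_btwn.1 hP.r_pos
      refine ⟨q / 4, by have : 0 < q := by exact_mod_cast hq0
                        positivity, ?_⟩
      rw [mul_div_cancel₀ _ (by norm_num : (4:ℝ≥0) ≠ 0)]
      exact hqR.le
    have hP' := hP.mono (by exact_mod_cast (by positivity : (0:ℝ≥0) < 4 * r)) hrR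
    let σ : T → E × T' := fun t => (0, τ t - τ t0)
    have hσ : Continuous σ := by fun_prop
    let U : Set T := {t | ‖σ t‖₊ < r}
    have hU : IsOpen U := isOpen_lt (by fun_prop) continuous_const
    have hUt : t0 ∈ U := by simp [U, σ, hr]
    refine ⟨U, mem_nhdsWithin_of_mem_nhds (hU.mem_nhds hUt), U, hU.measurableSet, le_rfl, ?_⟩
    intro s' hs' hs'U
    have hms : MeasurableSet (s' ∩ S) := hs'.inter hSm
    have hfin : μ (s' ∩ S) ≠ ⊤ := ne_top_of_le_ne_top hμS (measure_mono Set.inter_subset_right)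
    have h := analytic_param_local μ (s' ∩ S) hms hfin K (x0, τ t0) P r hr hP' σ hσ.continuousOn
      (fun t ht => (hs'U ht.1).le)
    have h' : AnalyticAt ℂ (fun x : E => ∫ t in s' ∩ S, K ((x, τ t0) + σ t) ∂μ) x0 :=
      AnalyticAt.fun_comp (g := fun w => ∫ t in s' ∩ S, K (w + σ t) ∂μ) (f := fun x : E => (x, τ t0)) h
        (analyticAt_id.prod analyticAt_const)
    have heq : ∀ x t, ((x, τ t0) + σ t : E × T') = (x, τ t) := by
      intro x t; simp [σ]
    simp only [heq] at h'
    refine ⟨?_, h'⟩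
    have hball : ∀ᶠ x in 𝓝 x0, ‖x - x0‖₊ < r := by
      have : Tendsto (fun x => ‖x - x0‖₊) (𝓝 x0) (𝓝 0) := by
        have : Continuous (fun x => ‖x - x0‖₊) := by fun_prop
        simpa using this.tendsto x0
      exact this.eventually (gt_mem_nhds hr)
    filter_upwards [hball] with x hx
    have hmem : ∀ t, ‖σ t‖₊ < r → (x, τ t) ∈ Metric.closedBall ((x0, τ t0) : E × T') r ∧ ((x, τ t) ∈ eball ((x0, τ t0) : E × T') (4 * r : ℝ≥0)) := by
      intro t ht
      have e1 : ‖((x, τ t) : E × T') - (x0, τ t0)‖ < r := by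
        have : ((x, τ t) : E × T') - (x0, τ t0) = (x - x0, τ t - τ t0) := rfl
        rw [this, Prod.norm_def, max_lt_iff]
        refine ⟨hx, ?_⟩
        have h0 : ‖σ t‖ = ‖τ t - τ t0‖ := by simp [σ, Prod.norm_def]
        rw [← h0]; exact ht
      refine ⟨by rw [mem_closedBall, dist_eq_norm]; exact e1.le, ?_⟩
      rw [mem_eball, edist_eq_enorm_sub, enorm_eq_nnnorm, ENNReal.coe_lt_coe, ← NNReal.coe_lt_coe]
      push_cast
      have : (0:ℝ) < r := hr
      linarith
    have hrr : (r:ℝ≥0) < 4 * r := by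
        rw [← NNReal.coe_lt_coe]; push_cast
        have : (0:ℝ) < r := hr
        linarith
    -- bounded on closed ball via continuity on the compact closure
    have hKc : ContinuousOn (fun t => K (x, τ t)) (s' ∩ S) := by
      refine hP'.continuousOn.comp (by fun_prop) ?_
      intro t ht
      exact (hmem t (hs'U ht.1)).2
    have hKc2 : ContinuousOn (fun t => K (x, τ t)) (S ∩ {t | ‖σ t‖₊ ≤ r}) := by
      refine hP'.continuousOn.comp (by fun_prop) ?_
      intro t ht
      rw [mem_eball, edist_eq_enorm_sub, enorm_eq_nnnorm, ENNReal.coe_lt_coe]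
      have : ((x, τ t) : E × T') - (x0, τ t0) = (x - x0, τ t - τ t0) := rfl
      refine lt_of_le_of_lt ?_ hrr
      rw [this, ← NNReal.coe_le_coe, coe_nnnorm, Prod.norm_def, max_le_iff]
      refine ⟨hx.le, ?_⟩
      have h0 : ‖σ t‖ = ‖τ t - τ t0‖ := by simp [σ, Prod.norm_def]
      rw [← h0]; exact ht.2
    have hcomp : IsCompact (S ∩ {t | ‖σ t‖₊ ≤ r}) :=
      hS.inter_right (isClosed_le (by fun_prop) continuous_const)
    have := hKc2.integrableOn_compact (μ := μ) hcomp
    refine this.mono_set ?_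
    intro t ht
    have h7 : ‖σ t‖₊ < r := hs'U ht.1
    exact ⟨ht.2, h7.le⟩
end ParamInt
section Weyl
open MeasureTheory Metric
open scoped ContDiff

theorem integral_fderiv_zero {V B : Type*} [NormedAddCommGroup V] [NormedSpace ℝ V]
    [FiniteDimensional ℝ V] [MeasurableSpace V] [BorelSpace V] (μ : Measure V) [μ.IsAddHaarMeasure]
    [NormedAddCommGroup B] [NormedSpace ℝ B]
    (w : V → B) (hw : ContDiff ℝ 1 w) (hc : HasCompactSupport w) (v : V) :
    ∫ x, fderiv ℝ w x v ∂μ = 0 := by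
  have h1 : Continuous (fun x => fderiv ℝ w x v) := (hw.continuous_fderiv (by simp)).clm_apply continuous_const
  have h2 : Integrable (fun x => fderiv ℝ w x v) μ :=
    h1.integrable_of_hasCompactSupport (hc.fderiv_apply ℝ v)
  have h3 : Integrable w μ := hw.continuous.integrable_of_hasCompactSupport hc
  have := integral_smul_fderiv_eq_neg_fderiv_smul_of_integrable (μ := μ) (f := fun _ : V => (1:ℝ)) (g := w) (v := v)
    (by simp) (by simpa using h2) (by simpa using h3) (by fun_prop)
    (fun x _ => (hw.differentiable (by simp)) x)
  simpa using this

/-- quadratic form -/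
def qf {V : Type*} [NormedAddCommGroup V] [NormedSpace ℝ V]
    {ι : Type*} [Fintype ι] (c : ι → V →L[ℝ] ℝ) (z : V) : ℝ := ∑ i, (c i z) ^ 2

theorem qf_nonneg {V : Type*} [NormedAddCommGroup V] [NormedSpace ℝ V]
    {ι : Type*} [Fintype ι] (c : ι → V →L[ℝ] ℝ) (z : V) : 0 ≤ qf c z := Finset.sum_nonneg fun _ _ => sq_nonneg _

theorem weyl_eps {V : Type*} [NormedAddCommGroup V] [NormedSpace ℝ V]
    [FiniteDimensional ℝ V] [MeasurableSpace V] [BorelSpace V] (μ : Measure V) [μ.IsAddHaarMeasure]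
    {ι : Type*} [Fintype ι] [DecidableEq ι]
    (e : ι → V) (c : ι → V →L[ℝ] ℝ)
    (hce : ∀ i j, c i (e j) = if i = j then 1 else 0)
    (G : ℝ → ℝ) (n : ℝ) (hn : n = Fintype.card ι)
    (hG : ContDiffOn ℝ ∞ G (Set.Ioi 0)) (hG' : ∀ s, 0 < s → HasDerivAt G (s ^ (-n / 2)) s)
    (u : V → ℝ) (hu : ContDiff ℝ 1 u) (U : Set V)
    (hweak : ∀ φ : V → ℝ, ContDiff ℝ ∞ φ → HasCompactSupport φ → tsupport φ ⊆ U →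
      ∫ y, ∑ i, fderiv ℝ u y (e i) * fderiv ℝ φ y (e i) ∂μ = 0)
    (η : V → ℝ) (hη : ContDiff ℝ ∞ η) (hηc : HasCompactSupport η) (hηU : tsupport η ⊆ U)
    (z : V) (ε : ℝ) (hε : 0 < ε) :
    ∫ y, η y * u y * (2 * n * ε * (qf c (y - z) + ε) ^ (-n / 2 - 1)) ∂μ =
    ∫ y, ∑ i, (fderiv ℝ u y (e i) * fderiv ℝ η y (e i) * G (qf c (y - z) + ε)
      - u y * fderiv ℝ η y (e i) * (2 * c i (y - z) * (qf c (y - z) + ε) ^ (-n / 2))) ∂μ := by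
  set q : V → ℝ := fun y => qf c (y - z) + ε with hq
  have hqpos : ∀ y, 0 < q y := fun y => by
    have := qf_nonneg c (y - z); simp only [hq]; linarith
  have hqsm : ContDiff ℝ ∞ q := by
    simp only [hq, qf]; fun_prop
  have hqd : ∀ y i, fderiv ℝ q y (e i) = 2 * c i (y - z) := by
    intro y i
    have h : HasFDerivAt q (∑ j, (2 * c j (y - z)) • c j) y := by
      simp only [hq, qf]
      refine HasFDerivAt.add_const _ (HasFDerivAt.fun_sum fun j _ => ?_)
      have h1 : HasFDerivAt (fun y => c j (y - z)) (c j) y := by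
        have := (c j).hasFDerivAt.comp y ((hasFDerivAt_id y).sub_const z)
        rw [ContinuousLinearMap.comp_id] at this
        exact this
      simpa using h1.pow 2
    rw [h.fderiv]
    simp [hce]
  set Γ : V → ℝ := fun y => G (q y) with hΓ
  have hΓsm : ContDiff ℝ ∞ Γ := by
    rw [← contDiffOn_univ]
    exact hG.comp hqsm.contDiffOn (fun y _ => hqpos y)
  have hΓd : ∀ y i, fderiv ℝ Γ y (e i) = 2 * c i (y - z) * q y ^ (-n / 2) := by
    intro y i
    have h := (hG' (q y) (hqpos y)).comp_hasFDerivAt y (hqsm.differentiable (by simp) y).hasFDerivAt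
    have h' : fderiv ℝ Γ y = _ := h.fderiv
    rw [h']
    simp [hqd, mul_comm]
  set k : ι → V → ℝ := fun i y => 2 * c i (y - z) * q y ^ (-n / 2) with hk
  have hpsm : ∀ a : ℝ, ContDiff ℝ ∞ (fun y => q y ^ a) := fun a =>
    hqsm.rpow_const_of_ne (fun y => (hqpos y).ne')
  have hksm : ∀ i, ContDiff ℝ ∞ (k i) := by
    intro i
    have := hpsm (-n/2)
    simp only [hk]; fun_prop
  have hkd : ∀ y i, fderiv ℝ (k i) y (e i) =
      2 * q y ^ (-n / 2) + 2 * c i (y - z) * (2 * c i (y - z) * (-n / 2) * q y ^ (-n / 2 - 1)) := by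
    intro y i
    have h1 : HasFDerivAt (fun y => 2 * c i (y - z)) ((2:ℝ) • c i) y := by
      have : HasFDerivAt (fun y => c i (y - z)) (c i) y := by
        have := (c i).hasFDerivAt.comp y ((hasFDerivAt_id y).sub_const z)
        rw [ContinuousLinearMap.comp_id] at this
        exact this
      exact this.const_mul 2
    have h2 := (hqsm.differentiable (by simp) y).hasFDerivAt.rpow_const (p := -n/2) (Or.inl (hqpos y).ne')
    have h3 : fderiv ℝ (k i) y = _ := (h1.mul h2).fderiv
    rw [h3]
    simp [hqd, hce]
    ring
  have hu' : Differentiable ℝ u := hu.differentiable (by simp)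
  have hη' : Differentiable ℝ η := hη.differentiable (by simp)
  have w1 := hweak (fun y => η y * Γ y) (hη.mul hΓsm) hηc.mul_right ((tsupport_mul_subset_left).trans hηU)
  have d1 : ∀ i, ∫ y, fderiv ℝ (fun y => η y * u y * k i y) y (e i) ∂μ = 0 := by
    intro i
    refine integral_fderiv_zero μ _ ?_ (hηc.mul_right.mul_right) _
    exact ((hη.of_le (by exact_mod_cast le_top)).mul hu).mul ((hksm i).of_le (by exact_mod_cast le_top))
  have cu : ∀ i, Continuous (fun y => fderiv ℝ u y (e i)) := fun i =>
    (hu.continuous_fderiv (by simp)).clm_apply continuous_const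
  have cη : ∀ i, Continuous (fun y => fderiv ℝ η y (e i)) := fun i =>
    (hη.continuous_fderiv (by simp)).clm_apply continuous_const
  have sη : ∀ i, HasCompactSupport (fun y => fderiv ℝ η y (e i)) := fun i => hηc.fderiv_apply ℝ (e i)
  have ck : ∀ i, Continuous (k i) := fun i => (hksm i).continuous
  have i1 : ∀ i, Integrable (fun y => fderiv ℝ u y (e i) * fderiv ℝ η y (e i) * Γ y - u y * fderiv ℝ η y (e i) * k i y) μ := by
    intro i
    refine Continuous.integrable_of_hasCompactSupport ?_ ?_
    · exact (((cu i).mul (cη i)).mul hΓsm.continuous).sub ((hu.continuous.mul (cη i)).mul (ck i))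
    · exact HasCompactSupport.sub ((sη i).mul_left.mul_right) ((sη i).mul_left.mul_right)
  have i2 : Integrable (fun y => η y * u y * (2 * n * ε * q y ^ (-n / 2 - 1))) μ := by
    refine Continuous.integrable_of_hasCompactSupport ?_ hηc.mul_right.mul_right
    exact (hη.continuous.mul hu.continuous).mul (continuous_const.mul (hpsm _).continuous)
  have i3 : Integrable (fun y => ∑ i, fderiv ℝ u y (e i) * fderiv ℝ (fun y => η y * Γ y) y (e i)) μ := by
    refine integrable_finsetSum _ fun i _ => Continuous.integrable_of_hasCompactSupport ?_ ?_
    · exact (cu i).mul (((hη.mul hΓsm).continuous_fderiv (by simp)).clm_apply continuous_const)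
    · exact ((hηc.mul_right (f' := Γ)).fderiv_apply ℝ (e i)).mul_left
  have i4 : ∀ i, Integrable (fun y => fderiv ℝ (fun y => η y * u y * k i y) y (e i)) μ := by
    intro i
    refine Continuous.integrable_of_hasCompactSupport ?_ ?_
    · refine ContDiff.continuous_fderiv (n := 1) ?_ (by simp) |>.clm_apply continuous_const
      exact ((hη.of_le (by exact_mod_cast le_top)).mul hu).mul ((hksm i).of_le (by exact_mod_cast le_top))
    · exact (hηc.mul_right.mul_right).fderiv_apply ℝ (e i)
  have d2 : ∫ y, ∑ i, fderiv ℝ (fun y => η y * u y * k i y) y (e i) ∂μ = 0 := by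
    rw [integral_finsetSum _ (fun i _ => i4 i)]
    exact Finset.sum_eq_zero fun i _ => d1 i
  have i5 := integrable_finsetSum (μ := μ) Finset.univ (fun i _ => i1 i)
  rw [← sub_eq_zero, ← integral_sub i2 i5]
  have i6 : Integrable (fun y => ∑ i, fderiv ℝ (fun y => η y * u y * k i y) y (e i)) μ :=
    integrable_finsetSum _ (fun i _ => i4 i)
  rw [← sub_zero (0:ℝ)]
  nth_rewrite 1 [← d2]
  rw [← w1, ← integral_sub i6 i3]
  refine integral_congr_ae (Eventually.of_forall fun y => ?_)
  have e1 : ∀ i, fderiv ℝ (fun y => η y * Γ y) y (e i) = fderiv ℝ η y (e i) * Γ y + η y * k i y := by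
    intro i
    have h := ((hη' y).hasFDerivAt.mul (hΓsm.differentiable (by simp) y).hasFDerivAt).fderiv
    have h' : fderiv ℝ (fun y => η y * Γ y) y = _ := h
    rw [h']
    simp [hΓd, hk]
    ring
  have e2 : ∀ i, fderiv ℝ (fun y => η y * u y * k i y) y (e i) =
      fderiv ℝ η y (e i) * u y * k i y + η y * fderiv ℝ u y (e i) * k i y
       + η y * u y * fderiv ℝ (k i) y (e i) := by
    intro i
    have h := (((hη' y).hasFDerivAt.mul (hu' y).hasFDerivAt).mul ((hksm i).differentiable (by simp) y).hasFDerivAt).fderiv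
    have h' : fderiv ℝ (fun y => η y * u y * k i y) y = _ := h
    rw [h']
    simp
    ring
  have e3 : ∑ i, fderiv ℝ (k i) y (e i) = 2 * n * ε * q y ^ (-n / 2 - 1) := by
    simp only [hkd]
    rw [Finset.sum_add_distrib]
    simp only [Finset.sum_const, Finset.card_univ, nsmul_eq_mul, ← hn]
    have h5 : ∑ i, 2 * c i (y - z) * (2 * c i (y - z) * (-n / 2) * q y ^ (-n / 2 - 1)) =
        -2 * n * q y ^ (-n / 2 - 1) * qf c (y - z) := by
      rw [qf, Finset.mul_sum]
      refine Finset.sum_congr rfl fun i _ => by ring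
    rw [h5]
    have h6 : q y ^ (-n / 2) = q y ^ (-n / 2 - 1) * q y := by
      rw [Real.rpow_sub_one (hqpos y).ne']
      field_simp [(hqpos y).ne']
    rw [h6]
    have h7 : q y = qf c (y - z) + ε := rfl
    nth_rewrite 2 [h7]
    ring
  show _ - ∑ i, _ = ∑ i, _ - ∑ i, _
  rw [← e3, Finset.mul_sum, ← Finset.sum_sub_distrib, ← Finset.sum_sub_distrib]
  refine Finset.sum_congr rfl fun i _ => ?_
  rw [e1, e2]
  ring
end Weyl
section Weyl2
open MeasureTheory Metric
open scoped ContDiff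

theorem qf_smul {V : Type*} [NormedAddCommGroup V] [NormedSpace ℝ V]
    {ι : Type*} [Fintype ι] (c : ι → V →L[ℝ] ℝ) (k : ℝ) (z : V) : qf c (k • z) = k ^ 2 * qf c z := by
  simp only [qf, map_smul, smul_eq_mul, mul_pow, Finset.mul_sum]

theorem qf_continuous {V : Type*} [NormedAddCommGroup V] [NormedSpace ℝ V]
    {ι : Type*} [Fintype ι] (c : ι → V →L[ℝ] ℝ) : Continuous (qf c) := by
  unfold qf; fun_prop

theorem qf_sub_comm {V : Type*} [NormedAddCommGroup V] [NormedSpace ℝ V]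
    {ι : Type*} [Fintype ι] (c : ι → V →L[ℝ] ℝ) (y z : V) : qf c (y - z) = qf c (z - y) := by
  simp only [qf, map_sub]
  exact Finset.sum_congr rfl fun i _ => by ring

theorem weyl_lhs {V : Type*} [NormedAddCommGroup V] [NormedSpace ℝ V]
    [FiniteDimensional ℝ V] [MeasurableSpace V] [BorelSpace V] (μ : Measure V) [μ.IsAddHaarMeasure]
    {ι : Type*} [Fintype ι] (c : ι → V →L[ℝ] ℝ) (n : ℝ) (hn : n = Fintype.card ι)
    (hn0 : 0 < n) (hdim : Module.finrank ℝ V = Fintype.card ι)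
    (hQ : ∀ z, ‖z‖ ^ 2 ≤ qf c z) :
    ∃ C : ℝ, 0 < C ∧ ∀ (g : V → ℝ) (z : V), Integrable g μ → ContinuousAt g z →
      Tendsto (fun k : ℝ => ∫ y, g y * (2 * n * (k ^ 2)⁻¹ * (qf c (y - z) + (k ^ 2)⁻¹) ^ (-n / 2 - 1)) ∂μ)
        atTop (𝓝 (C * g z)) := by
  have hpos : ∀ y, 0 < qf c y + 1 := fun y => by have := qf_nonneg c y; linarith
  set φ0 : V → ℝ := fun y => 2 * n * (qf c y + 1) ^ (-n / 2 - 1) with hφ0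
  have hφpos : ∀ y, 0 < φ0 y := fun y => by
    have := hpos y; simp only [hφ0]; positivity
  have hφc : Continuous φ0 := by
    refine continuous_const.mul ?_
    exact ((qf_continuous c).add continuous_const).rpow_const fun y => Or.inl (hpos y).ne'
  have hle : ∀ y, φ0 y ≤ 2 * n * (1 + ‖y‖ ^ 2) ^ (-(n + 2) / 2) := by
    intro y
    have e1 : -(n + 2) / 2 = -n / 2 - 1 := by ring
    rw [e1]
    refine mul_le_mul_of_nonneg_left ?_ (by positivity)
    exact Real.rpow_le_rpow_of_nonpos (by positivity) (by have := hQ y; linarith) (by linarith)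
  have hintg : Integrable φ0 μ := by
    have h1 : Integrable (fun y : V => 2 * n * (1 + ‖y‖ ^ 2) ^ (-(n + 2) / 2)) μ :=
      (integrable_rpow_neg_one_add_norm_sq (by rw [hdim, ← hn]; linarith)).const_mul _
    refine h1.mono' hφc.aestronglyMeasurable (Eventually.of_forall fun y => ?_)
    rw [Real.norm_of_nonneg (hφpos y).le]; exact hle y
  obtain ⟨C, hC⟩ : ∃ C, C = ∫ y, φ0 y ∂μ := ⟨_, rfl⟩
  have hCpos : 0 < C := by
    rw [hC, integral_pos_iff_support_of_nonneg (fun y => (hφpos y).le) hintg]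
    have : Function.support φ0 = Set.univ := by
      ext y; simp [(hφpos y).ne']
    rw [this]
    exact isOpen_univ.measure_pos μ Set.univ_nonempty
  refine ⟨C, hCpos, fun g z hg hgz => ?_⟩
  have hdec : Tendsto (fun x => ‖x‖ ^ Module.finrank ℝ V * (C⁻¹ * φ0 x)) (Bornology.cobounded V) (𝓝 0) := by
    have h1 : Tendsto (fun x : V => C⁻¹ * (2 * n) * (‖x‖ ^ 2 + 1)⁻¹) (Bornology.cobounded V) (𝓝 (C⁻¹ * (2 * n) * 0)) := by
      refine Tendsto.const_mul _ (tendsto_inv_atTop_zero.comp ?_)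
      exact tendsto_atTop_add_const_right _ _ ((tendsto_pow_atTop (by norm_num)).comp tendsto_norm_cobounded_atTop)
    rw [mul_zero] at h1
    refine squeeze_zero (fun x => mul_nonneg (pow_nonneg (norm_nonneg _) _)
      (mul_nonneg (inv_nonneg.2 hCpos.le) (hφpos x).le)) (fun x => ?_) h1
    have hp := hpos x
    have h2 : ‖x‖ ^ Module.finrank ℝ V ≤ (qf c x + 1) ^ (n / 2) := by
      have : (qf c x + 1) ^ (n / 2) = (Real.sqrt (qf c x + 1)) ^ Module.finrank ℝ V := by
        rw [Real.sqrt_eq_rpow, ← Real.rpow_natCast, ← Real.rpow_mul hp.le, hdim, ← hn]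
        congr 1; ring
      rw [this]
      refine pow_le_pow_left₀ (norm_nonneg _) (Real.le_sqrt_of_sq_le ?_) _
      have := hQ x; linarith
    have h3 : (qf c x + 1) ^ (-n / 2 - 1) = ((qf c x + 1) ^ (n / 2))⁻¹ * (qf c x + 1)⁻¹ := by
      rw [Real.rpow_sub_one hp.ne', neg_div, Real.rpow_neg hp.le]; rfl
    have h4 : 0 < (qf c x + 1) ^ (n / 2) := by positivity
    calc ‖x‖ ^ Module.finrank ℝ V * (C⁻¹ * φ0 x)
        ≤ (qf c x + 1) ^ (n / 2) * (C⁻¹ * φ0 x) := by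
          refine mul_le_mul_of_nonneg_right h2 (mul_nonneg (inv_nonneg.2 hCpos.le) (hφpos x).le)
      _ = C⁻¹ * (2 * n) * (qf c x + 1)⁻¹ := by
          simp only [hφ0, h3]; field_simp
      _ ≤ _ := by
          refine mul_le_mul_of_nonneg_left ?_ (by positivity)
          refine inv_anti₀ (by positivity) ?_
          have := hQ x; linarith
  have key := tendsto_integral_comp_smul_smul_of_integrable' (μ := μ) (φ := fun y => C⁻¹ * φ0 y)
    (fun y => mul_nonneg (inv_nonneg.2 hCpos.le) (hφpos y).le)
    (by rw [integral_const_mul, ← hC, inv_mul_cancel₀ hCpos.ne']) hdec hg hgz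
  have key2 := key.const_mul C
  refine key2.congr' ?_
  filter_upwards [eventually_gt_atTop 0] with k hk
  rw [← integral_const_mul]
  refine integral_congr_ae (Eventually.of_forall fun y => ?_)
  simp only [hφ0, qf_smul, smul_eq_mul]
  have hq := qf_nonneg c (z - y)
  rw [qf_sub_comm c y z]
  have h5 : k ^ 2 * qf c (z - y) + 1 = k ^ 2 * (qf c (z - y) + (k ^ 2)⁻¹) := by
    field_simp
  have h6 : (k ^ 2) ^ (-n / 2 - 1) * k ^ Module.finrank ℝ V = (k ^ 2)⁻¹ := by
    rw [hdim, ← Real.rpow_natCast k (Fintype.card ι), ← hn, ← Real.rpow_natCast k 2, ← Real.rpow_mul hk.le, ← Real.rpow_add hk,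
      ← Real.rpow_neg hk.le]
    congr 1; push_cast; ring
  rw [h5, Real.mul_rpow (by positivity) (by positivity), ← h6]
  field_simp

theorem weyl_repr {V : Type*} [NormedAddCommGroup V] [NormedSpace ℝ V]
    [FiniteDimensional ℝ V] [MeasurableSpace V] [BorelSpace V] (μ : Measure V) [μ.IsAddHaarMeasure]
    {ι : Type*} [Fintype ι] [DecidableEq ι]
    (e : ι → V) (c : ι → V →L[ℝ] ℝ)
    (hce : ∀ i j, c i (e j) = if i = j then 1 else 0)
    (G : ℝ → ℝ) (n : ℝ) (hn : n = Fintype.card ι)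
    (hn0 : 0 < n) (hdim : Module.finrank ℝ V = Fintype.card ι)
    (hQ : ∀ z, ‖z‖ ^ 2 ≤ qf c z)
    (hG : ContDiffOn ℝ ∞ G (Set.Ioi 0)) (hG' : ∀ s, 0 < s → HasDerivAt G (s ^ (-n / 2)) s)
    (u : V → ℝ) (hu : ContDiff ℝ 1 u) (z0 : V) (R : ℝ) (hR : 0 < R)
    (hweak : ∀ φ : V → ℝ, ContDiff ℝ ∞ φ → HasCompactSupport φ → tsupport φ ⊆ ball z0 (2 * R) →
      ∫ y, ∑ i, fderiv ℝ u y (e i) * fderiv ℝ φ y (e i) ∂μ = 0) :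
    ∃ (h0 : V → ℝ) (h : ι → V → ℝ), Continuous h0 ∧ (∀ i, Continuous (h i)) ∧
      ∀ z ∈ ball z0 R, u z = ∫ y in closedBall z0 (2 * R) \ ball z0 R,
        (G (qf c (z - y)) * h0 y + (qf c (z - y)) ^ (-n / 2) * ∑ i, c i (z - y) * h i y) ∂μ := by
  obtain ⟨C, hC, hlim⟩ := weyl_lhs μ c n hn hn0 hdim hQ
  let η : ContDiffBump z0 := ⟨R, 3 / 2 * R, hR, by linarith⟩
  have hη : ContDiff ℝ ∞ (η : V → ℝ) := η.contDiff
  have hηc : HasCompactSupport (η : V → ℝ) := η.hasCompactSupport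
  have hηt : tsupport (η : V → ℝ) = closedBall z0 (3 / 2 * R) := η.tsupport_eq
  have hηU : tsupport (η : V → ℝ) ⊆ ball z0 (2 * R) := by
    rw [hηt]; exact closedBall_subset_ball (by linarith)
  set S := closedBall z0 (2 * R) \ ball z0 R with hS
  have hSc : IsCompact S := (isCompact_closedBall _ _).diff isOpen_ball
  have hSm : MeasurableSet S := hSc.measurableSet
  have hd0 : ∀ y, y ∉ S → ∀ i, fderiv ℝ (η : V → ℝ) y (e i) = 0 := by
    intro y hy i
    have : fderiv ℝ (η : V → ℝ) y = 0 := by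
      by_cases h : y ∈ ball z0 R
      · have h1 : (η : V → ℝ) =ᶠ[𝓝 y] fun _ => (1:ℝ) := by
          filter_upwards [isOpen_ball.mem_nhds h] with x hx
          exact η.one_of_mem_closedBall (ball_subset_closedBall hx)
        rw [h1.fderiv_eq]; simp
      · have h2 : y ∉ closedBall z0 (2 * R) := fun h3 => hy ⟨h3, h⟩
        have h3 : y ∉ tsupport (η : V → ℝ) := fun h4 => h2 (ball_subset_closedBall (hηU h4))
        have := support_fderiv_subset ℝ (f := (η : V → ℝ))
        by_contra h5
        exact h3 (this h5)
    rw [this]; simp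
  have cu : ∀ i, Continuous (fun y => fderiv ℝ u y (e i)) := fun i =>
    (hu.continuous_fderiv (by simp)).clm_apply continuous_const
  have cη : ∀ i, Continuous (fun y => fderiv ℝ (η : V → ℝ) y (e i)) := fun i =>
    (hη.continuous_fderiv (by simp)).clm_apply continuous_const
  set h0 : V → ℝ := fun y => C⁻¹ * ∑ i, fderiv ℝ u y (e i) * fderiv ℝ (η : V → ℝ) y (e i) with hh0
  set h : ι → V → ℝ := fun i y => C⁻¹ * (2 * u y * fderiv ℝ (η : V → ℝ) y (e i)) with hh
  have ch0 : Continuous h0 := continuous_const.mul (continuous_finsetSum _ fun i _ => (cu i).mul (cη i))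
  have ch : ∀ i, Continuous (h i) := fun i =>
    continuous_const.mul ((continuous_const.mul hu.continuous).mul (cη i))
  refine ⟨h0, h, ch0, ch, fun z hz => ?_⟩
  have hzd : dist z z0 < R := hz
  set d := R - dist z z0 with hd
  have hdpos : 0 < d := by rw [hd]; linarith
  have hSd : ∀ y ∈ S, d ^ 2 ≤ qf c (z - y) := by
    intro y hy
    refine le_trans ?_ (hQ _)
    refine pow_le_pow_left₀ hdpos.le ?_ 2
    have h1 : R ≤ dist y z0 := by simpa using hy.2
    have h2 := dist_triangle y z z0
    rw [← dist_eq_norm, dist_comm z y]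
    rw [hd]; linarith
  let M : ℝ → V → ℝ := fun ε y => max (qf c (z - y) + ε) (d ^ 2 / 2)
  have hMpos : ∀ ε y, 0 < M ε y := fun ε y => lt_of_lt_of_le (by positivity) (le_max_right _ _)
  have hMc : Continuous (Function.uncurry M) := by
    have := qf_continuous c
    show Continuous fun x : ℝ × V => max (qf c (z - x.2) + x.1) (d ^ 2 / 2)
    fun_prop
  have hMe : ∀ ε, 0 ≤ ε → ∀ y ∈ S, M ε y = qf c (z - y) + ε := by
    intro ε hε y hy
    refine max_eq_left ?_
    have := hSd y hy
    nlinarith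
  let k : ℝ → V → ℝ := fun ε y => G (M ε y) * h0 y + (M ε y) ^ (-n / 2) * ∑ i, c i (z - y) * h i y
  have hkc : Continuous (Function.uncurry k) := by
    have hGc : Continuous fun x : ℝ × V => G (M x.1 x.2) :=
      hG.continuousOn.comp_continuous hMc (fun x => hMpos x.1 x.2)
    have hpc : Continuous fun x : ℝ × V => (M x.1 x.2) ^ (-n / 2) :=
      hMc.rpow_const fun x => Or.inl (hMpos x.1 x.2).ne'
    show Continuous fun x : ℝ × V => G (M x.1 x.2) * h0 x.2 + (M x.1 x.2) ^ (-n / 2) * ∑ i, c i (z - x.2) * h i x.2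
    refine (hGc.mul (ch0.comp continuous_snd)).add (hpc.mul (continuous_finsetSum _ fun i _ => ?_))
    exact ((c i).continuous.comp (continuous_const.sub continuous_snd)).mul ((ch i).comp continuous_snd)
  have hI := continuous_parametric_integral_of_continuous (μ := μ) hkc hSc
  have hI0 := (hI.tendsto 0).comp (tendsto_inv_atTop_zero.comp (tendsto_pow_atTop (α := ℝ) (n := 2) (by norm_num)))
  have hη1 : (η : V → ℝ) z = 1 := η.one_of_mem_closedBall (ball_subset_closedBall hz)
  have hL := (hlim (fun y => η y * u y) z
    ((hη.continuous.mul hu.continuous).integrable_of_hasCompactSupport hηc.mul_right)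
    (hη.continuous.mul hu.continuous).continuousAt).const_mul C⁻¹
  rw [hη1, one_mul, inv_mul_cancel_left₀ hC.ne'] at hL
  have hgoal : ∫ y in S, (G (qf c (z - y)) * h0 y + (qf c (z - y)) ^ (-n / 2) * ∑ i, c i (z - y) * h i y) ∂μ
     = ∫ y in S, k 0 y ∂μ := by
    refine setIntegral_congr_fun hSm fun y hy => ?_
    simp only [k]
    rw [hMe 0 le_rfl y hy, add_zero]
  rw [hgoal]
  refine tendsto_nhds_unique (hL.congr' ?_) hI0
  filter_upwards [eventually_gt_atTop 0] with t ht
  have hε : 0 < (t ^ 2)⁻¹ := by positivity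
  rw [weyl_eps μ e c hce G n hn hG hG' u hu _ hweak η hη hηc hηU z _ hε]
  simp only [Function.comp]
  rw [← integral_const_mul, ← setIntegral_eq_integral_of_forall_compl_eq_zero (s := S)]
  · refine setIntegral_congr_fun hSm fun y hy => ?_
    simp only [k]
    rw [hMe _ hε.le y hy, qf_sub_comm c y z]
    simp only [hh0, hh, Finset.mul_sum]
    rw [← Finset.sum_add_distrib]
    refine Finset.sum_congr rfl fun i _ => ?_
    rw [← neg_sub z y, map_neg]
    ring
  · intro y hy
    simp [hd0 y hy]
end Weyl2
section Complexify
open MeasureTheory Metric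
open scoped ContDiff

theorem exists_fund (n : ℝ) : ∃ (G : ℝ → ℝ) (GC : ℂ → ℂ), ContDiffOn ℝ ∞ G (Set.Ioi 0) ∧
    (∀ s, 0 < s → HasDerivAt G (s ^ (-n / 2)) s) ∧ (∀ s : ℝ, 0 < s → GC s = G s) ∧
    ∀ w : ℂ, 0 < w.re → AnalyticAt ℂ GC w := by
  by_cases hn : n = 2
  · refine ⟨Real.log, Complex.log, ?_, ?_, ?_, ?_⟩
    · exact Real.contDiffOn_log.mono fun s hs => ne_of_gt hs
    · intro s hs
      have := Real.hasDerivAt_log hs.ne'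
      rw [hn]
      convert this using 1
      rw [show (-2 / 2 : ℝ) = -1 by norm_num, Real.rpow_neg_one]
    · intro s hs
      exact (Complex.ofReal_log hs.le).symm
    · intro w hw
      exact analyticAt_clog (Or.inl hw)
  · have h1 : 1 - n / 2 ≠ 0 := fun h => hn (by linarith)
    refine ⟨fun s => s ^ (1 - n / 2) / (1 - n / 2), fun w => w ^ ((1 - n / 2 : ℝ) : ℂ) / ((1 - n / 2 : ℝ) : ℂ), ?_, ?_, ?_, ?_⟩
    · intro s hs
      have hs' : s ≠ 0 := ne_of_gt hs
      exact ((contDiffAt_id.rpow_const_of_ne hs').div_const _).contDiffWithinAt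
    · intro s hs
      have := (Real.hasDerivAt_rpow_const (x := s) (p := 1 - n / 2) (Or.inl hs.ne')).div_const (1 - n / 2)
      rw [mul_div_cancel_left₀ _ h1, show 1 - n / 2 - 1 = -n / 2 by ring] at this
      exact this
    · intro s hs
      simp only []
      rw [Complex.ofReal_div, Complex.ofReal_cpow hs.le]
    · intro w hw
      exact (AnalyticAt.cpow analyticAt_id analyticAt_const (Or.inl hw)).div_const

/-- coordinate directions -/
def eR (p : ℕ) : Option (Fin (p + 1)) → (Fin (p + 1) → ℝ) × ℝ
  | none => (0, 1)
  | some s => (Pi.single s 1, 0)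

/-- coordinate functionals -/
def cR (p : ℕ) : Option (Fin (p + 1)) → ((Fin (p + 1) → ℝ) × ℝ) →L[ℝ] ℝ
  | none => ContinuousLinearMap.snd ℝ _ _
  | some s => (ContinuousLinearMap.proj s).comp (ContinuousLinearMap.fst ℝ _ _)

/-- complex coordinate functionals -/
noncomputable def cC (p : ℕ) : Option (Fin (p + 1)) → ((Fin (p + 1) → ℂ) × ℂ) →L[ℂ] ℂ
  | none => ContinuousLinearMap.snd ℂ _ _
  | some s => (ContinuousLinearMap.proj s).comp (ContinuousLinearMap.fst ℂ _ _)

theorem cR_eR (p : ℕ) (i j : Option (Fin (p + 1))) : cR p i (eR p j) = if i = j then 1 else 0 := by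
  rcases i with _ | i <;> rcases j with _ | j <;> simp [cR, eR, Pi.single_apply]

theorem norm_sq_le_qf (p : ℕ) (z : (Fin (p + 1) → ℝ) × ℝ) : ‖z‖ ^ 2 ≤ qf (cR p) z := by
  have h : ∀ i, |cR p i z| ≤ Real.sqrt (qf (cR p) z) := fun i => by
    refine Real.abs_le_sqrt ?_
    exact Finset.single_le_sum (f := fun i => (cR p i z) ^ 2) (fun i _ => sq_nonneg _) (Finset.mem_univ i)
  have h1 : ‖z‖ ≤ Real.sqrt (qf (cR p) z) := by
    rw [norm_prod_le_iff]
    constructor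
    · rw [pi_norm_le_iff_of_nonneg (Real.sqrt_nonneg _)]
      intro s
      exact h (some s)
    · exact h none
  calc ‖z‖ ^ 2 ≤ (Real.sqrt (qf (cR p) z)) ^ 2 := pow_le_pow_left₀ (norm_nonneg _) h1 2
    _ = _ := Real.sq_sqrt (qf_nonneg _ _)

/-- complexification of points -/
def toC (p : ℕ) (y : (Fin (p + 1) → ℝ) × ℝ) : (Fin (p + 1) → ℂ) × ℂ := (fun s => (y.1 s : ℂ), (y.2 : ℂ))

theorem cC_toC (p : ℕ) (y) (i) : cC p i (toC p y) = (cR p i y : ℂ) := by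
  rcases i with _ | i <;> simp [cR, cC, toC]

theorem toC_sub (p : ℕ) (y z) : toC p (y - z) = toC p y - toC p z := by
  ext <;> simp [toC]

theorem continuous_toC (p : ℕ) : Continuous (toC p) := by
  unfold toC; fun_prop

/-- complex quadratic form -/
noncomputable def QC (p : ℕ) (z : (Fin (p + 1) → ℂ) × ℂ) : ℂ := ∑ i, (cC p i z) ^ 2

theorem QC_toC (p : ℕ) (y) : QC p (toC p y) = (qf (cR p) y : ℂ) := by
  simp [QC, qf, cC_toC]

theorem QC_re (p : ℕ) (y : (Fin (p + 1) → ℝ) × ℝ) (ζ : ℂ) :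
    (QC p (toC p y + (0, ζ))).re = qf (cR p) (y + (0, ζ.re)) - ζ.im ^ 2 := by
  simp [QC, qf, Fintype.sum_option, cC, cR, toC, pow_two]
  ring

theorem complex_ext (p : ℕ) (μ : Measure ((Fin (p + 1) → ℝ) × ℝ)) [μ.IsAddHaarMeasure]
    (u : (Fin (p + 1) → ℝ) × ℝ → ℝ) (hu : ContDiff ℝ 1 u) (z0 : (Fin (p + 1) → ℝ) × ℝ) (R : ℝ) (hR : 0 < R)
    (hweak : ∀ φ : (Fin (p + 1) → ℝ) × ℝ → ℝ, ContDiff ℝ ∞ φ → HasCompactSupport φ →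
      tsupport φ ⊆ ball z0 (2 * R) →
      ∫ y, ∑ i, fderiv ℝ u y (eR p i) * fderiv ℝ φ y (eR p i) ∂μ = 0) :
    ∃ H : (Fin (p + 1) → ℂ) × ℂ → ℂ,
      (∀ x : Fin (p + 1) → ℝ, ∀ ζ : ℂ, dist x z0.1 ≤ R / 4 → ‖ζ‖ ≤ R / 4 →
        AnalyticAt ℂ H (toC p (x, z0.2) + (0, ζ))) ∧ ∀ z ∈ ball z0 R, H (toC p z) = u z := by
  set n : ℝ := ((Fintype.card (Option (Fin (p + 1))) : ℕ) : ℝ) with hn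
  have hn0 : 0 < n := by rw [hn]; exact_mod_cast Fintype.card_pos
  obtain ⟨G, GC, hG, hG', hGC, hGCa⟩ := exists_fund n
  obtain ⟨h0, h, ch0, ch, hrep⟩ := weyl_repr μ (eR p) (cR p) (cR_eR p) G n hn hn0
    (by simp) (norm_sq_le_qf p) hG hG' u hu z0 R hR hweak
  set S := closedBall z0 (2 * R) \ ball z0 R with hS
  have hSc : IsCompact S := (isCompact_closedBall _ _).diff isOpen_ball
  have hSm : MeasurableSet S := hSc.measurableSet
  let K : ((Fin (p + 1) → ℂ) × ℂ) × (((Fin (p + 1) → ℂ) × ℂ) × ℂ × (Option (Fin (p + 1)) → ℂ)) → ℂ := fun X =>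
    GC (QC p (X.1 - X.2.1)) * X.2.2.1 +
      (QC p (X.1 - X.2.1)) ^ ((-n / 2 : ℝ) : ℂ) * ∑ i, cC p i (X.1 - X.2.1) * X.2.2.2 i
  have hK : ∀ X, 0 < (QC p (X.1 - X.2.1)).re → AnalyticAt ℂ K X := by
    intro X hX
    have hsub : AnalyticAt ℂ (fun X : ((Fin (p + 1) → ℂ) × ℂ) × (((Fin (p + 1) → ℂ) × ℂ) × ℂ × (Option (Fin (p + 1)) → ℂ)) => X.1 - X.2.1) X := by
      exact analyticAt_fst.fun_sub ((ContinuousLinearMap.fst ℂ _ _).comp (ContinuousLinearMap.snd ℂ _ _) |>.analyticAt X)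
    have hc : ∀ i, AnalyticAt ℂ (fun X : ((Fin (p + 1) → ℂ) × ℂ) × (((Fin (p + 1) → ℂ) × ℂ) × ℂ × (Option (Fin (p + 1)) → ℂ)) => cC p i (X.1 - X.2.1)) X := by
      intro i
      exact ((cC p i).analyticAt _).fun_comp hsub
    have hq : AnalyticAt ℂ (fun X : ((Fin (p + 1) → ℂ) × ℂ) × (((Fin (p + 1) → ℂ) × ℂ) × ℂ × (Option (Fin (p + 1)) → ℂ)) => QC p (X.1 - X.2.1)) X := by
      unfold QC
      exact Finset.univ.analyticAt_fun_sum fun i _ => (hc i).fun_pow 2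
    have hb : ∀ i, AnalyticAt ℂ (fun X : ((Fin (p + 1) → ℂ) × ℂ) × (((Fin (p + 1) → ℂ) × ℂ) × ℂ × (Option (Fin (p + 1)) → ℂ)) => X.2.2.2 i) X := by
      intro i
      exact ((ContinuousLinearMap.proj (R := ℂ) (φ := fun _ : Option (Fin (p + 1)) => ℂ) i).analyticAt _).fun_comp
        (f := fun X : ((Fin (p + 1) → ℂ) × ℂ) × (((Fin (p + 1) → ℂ) × ℂ) × ℂ × (Option (Fin (p + 1)) → ℂ)) => X.2.2.2)
        ((ContinuousLinearMap.snd ℂ _ _).comp ((ContinuousLinearMap.snd ℂ _ _).comp (ContinuousLinearMap.snd ℂ _ _)) |>.analyticAt X)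
    have ha : AnalyticAt ℂ (fun X : ((Fin (p + 1) → ℂ) × ℂ) × (((Fin (p + 1) → ℂ) × ℂ) × ℂ × (Option (Fin (p + 1)) → ℂ)) => X.2.2.1) X := by
      exact ((ContinuousLinearMap.fst ℂ _ _).comp ((ContinuousLinearMap.snd ℂ _ _).comp (ContinuousLinearMap.snd ℂ _ _)) |>.analyticAt X)
    refine AnalyticAt.fun_add (AnalyticAt.fun_mul (AnalyticAt.fun_comp (g := GC) (f := fun X : ((Fin (p + 1) → ℂ) × ℂ) × (((Fin (p + 1) → ℂ) × ℂ) × ℂ × (Option (Fin (p + 1)) → ℂ)) => QC p (X.1 - X.2.1)) (hGCa _ hX) hq) ha)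
      (AnalyticAt.fun_mul (AnalyticAt.cpow hq analyticAt_const (Or.inl hX)) ?_)
    exact Finset.univ.analyticAt_fun_sum fun i _ => (hc i).fun_mul (hb i)
  let τ : (Fin (p + 1) → ℝ) × ℝ → ((Fin (p + 1) → ℂ) × ℂ) × ℂ × (Option (Fin (p + 1)) → ℂ) :=
    fun y => (toC p y, (h0 y : ℂ), fun i => (h i y : ℂ))
  have hτ : Continuous τ := by
    refine (continuous_toC p).prodMk ((Complex.continuous_ofReal.comp ch0).prodMk ?_)
    exact continuous_pi fun i => Complex.continuous_ofReal.comp (ch i)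
  refine ⟨fun z => ∫ y in S, K (z, τ y) ∂μ, ?_, ?_⟩
  · intro x ζ hx hζ
    refine analytic_param μ S hSc K _ τ hτ fun y hy => hK _ ?_
    have e1 : (toC p (x, z0.2) + (0, ζ)) - toC p y = toC p ((x, z0.2) - y) + (0, ζ) := by
      rw [toC_sub]; abel
    show 0 < (QC p ((toC p (x, z0.2) + (0, ζ)) - toC p y)).re
    rw [e1, QC_re]
    have hre : |ζ.re| ≤ R / 4 := (Complex.abs_re_le_norm ζ).trans hζ
    have him : |ζ.im| ≤ R / 4 := (Complex.abs_im_le_norm ζ).trans hζ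
    set b : (Fin (p + 1) → ℝ) × ℝ := (x, z0.2 + ζ.re) with hb
    have e2 : (x, z0.2) - y + (0, ζ.re) = b - y := by
      ext <;> simp [hb]; ring
    have h1 : R ≤ dist y z0 := by simpa using hy.2
    have h2 : dist b z0 ≤ R / 4 := by
      rw [Prod.dist_eq]
      refine max_le hx ?_
      simpa [hb, Real.dist_eq] using hre
    have h3 := dist_triangle y b z0
    have h4 : 3 / 4 * R ≤ ‖b - y‖ := by
      rw [← dist_eq_norm, dist_comm]; linarith
    have h5 : (3 / 4 * R) ^ 2 ≤ ‖b - y‖ ^ 2 := pow_le_pow_left₀ (by positivity) h4 2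
    have h6 := norm_sq_le_qf p (b - y)
    have h7 : ζ.im ^ 2 ≤ (R / 4) ^ 2 := sq_le_sq' (by linarith [(abs_le.1 him).1]) (abs_le.1 him).2
    rw [e2]
    nlinarith
  · intro z hz
    rw [hrep z hz, ← integral_complex_ofReal]
    refine setIntegral_congr_fun hSm fun y hy => ?_
    have hpos : 0 < qf (cR p) (z - y) := by
      refine lt_of_lt_of_le ?_ (norm_sq_le_qf p _)
      have : z - y ≠ 0 := by
        intro h1
        rw [sub_eq_zero] at h1
        exact hy.2 (h1 ▸ hz)
      positivity
    simp only [K, τ]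
    rw [← toC_sub, QC_toC, hGC _ hpos, ← Complex.ofReal_cpow hpos.le]
    simp [cC_toC]
end Complexify
section Split
open MeasureTheory Metric
open scoped ContDiff

theorem analytic_circle {E : Type*} [NormedAddCommGroup E] [NormedSpace ℂ E] (x0 : E) (ρ : ℝ)
    (k : E × ℂ → ℂ) (hk : ∀ ζ : ℂ, ‖ζ‖ = |ρ| → AnalyticAt ℂ k (x0, ζ)) :
    AnalyticAt ℂ (fun x => ∮ ζ in C(0, ρ), k (x, ζ)) x0 := by
  have h := analytic_param (volume : Measure ℝ) (Set.Icc 0 (2 * Real.pi)) isCompact_Icc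
    (fun X : E × ℂ => (X.2 * Complex.I) * k X) x0 (circleMap 0 ρ) (continuous_circleMap 0 ρ) (by
      intro t _
      exact AnalyticAt.fun_mul (analyticAt_snd.fun_mul analyticAt_const) (hk _ (by simp)))
  refine h.congr (Eventually.of_forall fun x => ?_)
  simp only [circleIntegral, deriv_circleMap, smul_eq_mul]
  rw [intervalIntegral.integral_of_le (by positivity), integral_Icc_eq_integral_Ioc]

theorem real_split (p : ℕ) (μ : Measure ((Fin (p + 1) → ℝ) × ℝ)) [μ.IsAddHaarMeasure]
    (u : (Fin (p + 1) → ℝ) × ℝ → ℝ) (hu : ContDiff ℝ 1 u) (z0 : (Fin (p + 1) → ℝ) × ℝ) (R : ℝ) (hR : 0 < R)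
    (hweak : ∀ φ : (Fin (p + 1) → ℝ) × ℝ → ℝ, ContDiff ℝ ∞ φ → HasCompactSupport φ →
      tsupport φ ⊆ ball z0 (2 * R) →
      ∫ y, ∑ i, fderiv ℝ u y (eR p i) * fderiv ℝ φ y (eR p i) ∂μ = 0) :
    ∃ g₁ g₂ : (Fin (p + 1) → ℝ) × ℝ → ℝ, AnalyticAt ℝ g₁ (z0.1, 0) ∧ AnalyticAt ℝ g₂ (z0.1, 0) ∧
      ∀ᶠ z in 𝓝 (z0.1, (0 : ℝ)), u (z.1, z0.2 + z.2) = g₁ (z.1, z.2 ^ 2) + z.2 * g₂ (z.1, z.2 ^ 2) := by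
  obtain ⟨H, hHa, hHu⟩ := complex_ext p μ u hu z0 R hR hweak
  set ρ := R / 4 with hρ
  have hρ0 : 0 < ρ := by positivity
  have hpt : ∀ (x : Fin (p + 1) → ℝ) (ζ : ℂ), toC p (x, z0.2) + (0, ζ) = (fun s => (x s : ℂ), (z0.2 : ℂ) + ζ) := by
    intro x ζ; ext <;> simp [toC]
  let A0 : ((Fin (p + 1) → ℂ) × ℂ) × ℂ → ℂ := fun X => H (X.1.1, (z0.2 : ℂ) + X.2) * (X.2 ^ 2 - X.1.2)⁻¹
  have hA0 : ∀ ζ : ℂ, ‖ζ‖ = |ρ| → AnalyticAt ℂ A0 (toC p (z0.1, 0), ζ) := by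
    intro ζ hζ
    rw [abs_of_pos hρ0] at hζ
    refine AnalyticAt.fun_mul ?_ ?_
    · refine AnalyticAt.fun_comp (g := H) (f := fun X : ((Fin (p + 1) → ℂ) × ℂ) × ℂ => (X.1.1, (z0.2 : ℂ) + X.2)) ?_ ?_
      · have := hHa z0.1 ζ (by simpa using hρ0.le) hζ.le
        rw [hpt] at this
        exact this
      · refine AnalyticAt.prod ?_ (analyticAt_const.fun_add analyticAt_snd)
        exact ((ContinuousLinearMap.fst ℂ (Fin (p + 1) → ℂ) ℂ).comp
          (ContinuousLinearMap.fst ℂ ((Fin (p + 1) → ℂ) × ℂ) ℂ)).analyticAt _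
    · refine AnalyticAt.fun_inv ?_ ?_
      · refine (analyticAt_snd.fun_pow 2).fun_sub ?_
        exact ((ContinuousLinearMap.snd ℂ (Fin (p + 1) → ℂ) ℂ).comp
          (ContinuousLinearMap.fst ℂ ((Fin (p + 1) → ℂ) × ℂ) ℂ)).analyticAt _
      · have : ζ ≠ 0 := by
          rw [← norm_pos_iff, hζ]; exact hρ0
        simpa [toC] using this
  have hΨ1 := analytic_circle (toC p (z0.1, 0)) ρ (fun X => X.2 * A0 X)
    (fun ζ hζ => analyticAt_snd.fun_mul (hA0 ζ hζ))
  have hΨ2 := analytic_circle (toC p (z0.1, 0)) ρ A0 hA0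
  have hre : ∀ Ψ : (Fin (p + 1) → ℂ) × ℂ → ℂ, AnalyticAt ℂ Ψ (toC p (z0.1, 0)) →
      AnalyticAt ℝ (fun z => ((2 * Real.pi * Complex.I : ℂ)⁻¹ * Ψ (toC p z)).re) (z0.1, 0) := by
    intro Ψ hΨ
    have h1 : AnalyticAt ℝ Ψ (toC p (z0.1, 0)) := hΨ.restrictScalars
    have h2 : AnalyticAt ℝ (toC p) (z0.1, 0) := by
      unfold toC
      refine AnalyticAt.prod ?_ ?_
      · refine AnalyticAt.pi fun s => ?_
        exact (Complex.ofRealCLM.comp ((ContinuousLinearMap.proj s).comp (ContinuousLinearMap.fst ℝ (Fin (p + 1) → ℝ) ℝ))).analyticAt _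
      · exact (Complex.ofRealCLM.comp (ContinuousLinearMap.snd ℝ (Fin (p + 1) → ℝ) ℝ)).analyticAt _
    exact (Complex.reCLM.analyticAt _).fun_comp (f := fun z => (2 * Real.pi * Complex.I : ℂ)⁻¹ * Ψ (toC p z))
      (analyticAt_const.fun_mul (AnalyticAt.fun_comp (g := Ψ) (f := toC p) h1 h2))
  refine ⟨_, _, hre _ hΨ1, hre _ hΨ2, ?_⟩
  have hev : ∀ᶠ z in 𝓝 (z0.1, (0 : ℝ)), z ∈ ball (z0.1, (0:ℝ)) ρ := ball_mem_nhds _ hρ0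
  filter_upwards [hev] with z hz
  obtain ⟨x, r⟩ := z
  have hz' : max (dist x z0.1) (dist r 0) < ρ := hz
  have hx : dist x z0.1 < ρ := lt_of_le_of_lt (le_max_left _ _) hz'
  have hr : |r| < ρ := by
    have := lt_of_le_of_lt (le_max_right _ _) hz'
    simpa using this
  simp only
  set w : ℂ → ℂ := fun ζ => H (fun s => (x s : ℂ), (z0.2 : ℂ) + ζ) with hw
  have hwd : ∀ ζ : ℂ, ‖ζ‖ ≤ ρ → DifferentiableAt ℂ w ζ := by
    intro ζ hζ
    have h1 := hHa x ζ hx.le hζ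
    rw [hpt] at h1
    refine h1.differentiableAt.comp (f := fun ζ : ℂ => ((fun s => (x s : ℂ), (z0.2 : ℂ) + ζ) : (Fin (p + 1) → ℂ) × ℂ)) ζ ?_
    fun_prop
  have hwD : DifferentiableOn ℂ w (closedBall 0 ρ) := by
    intro ζ hζ
    exact (hwd ζ (by simpa using hζ)).differentiableWithinAt
  have hcau := hwD.circleIntegral_sub_inv_smul (w := (r : ℂ)) (by simpa using hr)
  have hne : ∀ ζ ∈ sphere (0:ℂ) ρ, ζ ^ 2 - ((r ^ 2 : ℝ) : ℂ) ≠ 0 := by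
    intro ζ hζ h1
    have h2 : ‖ζ‖ = ρ := by simpa using hζ
    rw [sub_eq_zero] at h1
    have h3 : ‖ζ‖ ^ 2 = |r| ^ 2 := by
      rw [← norm_pow, h1]; simp
    rw [h2] at h3
    have := pow_lt_pow_left₀ hr (abs_nonneg r) (n := 2) (by norm_num)
    linarith
  have hA0c : ContinuousOn (fun ζ => A0 (toC p (x, r ^ 2), ζ)) (sphere 0 ρ) := by
    refine ContinuousOn.mul ?_ ?_
    · intro ζ hζ
      have h2 : ‖ζ‖ = ρ := by simpa using hζ
      exact (hwd ζ h2.le).continuousAt.continuousWithinAt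
    · refine ContinuousOn.inv₀ (by fun_prop) ?_
      exact hne
  have hci1 : CircleIntegrable (fun ζ => ζ * A0 (toC p (x, r ^ 2), ζ)) 0 ρ :=
    (continuousOn_id.mul hA0c).circleIntegrable hρ0.le
  have hci2 : CircleIntegrable (fun ζ => (r : ℂ) * A0 (toC p (x, r ^ 2), ζ)) 0 ρ :=
    (continuousOn_const.mul hA0c).circleIntegrable hρ0.le
  have heq : ∮ ζ in C(0, ρ), (ζ - (r : ℂ))⁻¹ • w ζ =
      (∮ ζ in C(0, ρ), ζ * A0 (toC p (x, r ^ 2), ζ)) + r * ∮ ζ in C(0, ρ), A0 (toC p (x, r ^ 2), ζ) := by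
    rw [← circleIntegral.integral_const_mul, ← circleIntegral.integral_add hci1 hci2]
    refine circleIntegral.integral_congr hρ0.le fun ζ hζ => ?_
    have h1 := hne ζ hζ
    have h2 : (ζ - r) * (ζ + r) = ζ ^ 2 - ((r ^ 2 : ℝ) : ℂ) := by push_cast; ring
    have h3 : ζ - r ≠ 0 := fun h => h1 (by rw [← h2, h, zero_mul])
    have h4 : ζ + r ≠ 0 := fun h => h1 (by rw [← h2, h, mul_zero])
    simp only [A0, toC, smul_eq_mul, hw]
    rw [← h2]
    field_simp
  have hval : (u (x, z0.2 + r) : ℂ) = w r := by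
    rw [← hHu (x, z0.2 + r) ?_]
    · simp [toC, hw]
    · rw [mem_ball, Prod.dist_eq]
      refine max_lt ?_ ?_
      · refine hx.trans ?_; rw [hρ]; linarith
      · rw [Real.dist_eq]; simp only [add_sub_cancel_left]
        refine hr.trans ?_; rw [hρ]; linarith
  have hfin : (u (x, z0.2 + r) : ℂ) = (2 * Real.pi * Complex.I : ℂ)⁻¹ * (∮ ζ in C(0, ρ), ζ * A0 (toC p (x, r ^ 2), ζ))
      + r * ((2 * Real.pi * Complex.I : ℂ)⁻¹ * ∮ ζ in C(0, ρ), A0 (toC p (x, r ^ 2), ζ)) := by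
    have : (2 * Real.pi * Complex.I : ℂ) ≠ 0 := by
      simp [Real.pi_ne_zero]
    rw [hval]
    rw [heq, smul_eq_mul] at hcau
    rw [eq_comm, ← mul_right_inj' this, ← hcau]
    field_simp
  have := congrArg Complex.re hfin
  rw [Complex.add_re, Complex.re_ofReal_mul, Complex.ofReal_re] at this
  exact this
end Split
section WeakHarm
open MeasureTheory Metric
open scoped ContDiff

theorem sum_clifford {B : Type*} [NormedAddCommGroup B] [NormedSpace ℝ B] {p : ℕ}
    (L L' : Fin (p + 1) → B →L[ℝ] B)
    (hL : ∀ s t b, L' s (L t b) + L' t (L s b) = if s = t then (2 : ℝ) • b else 0)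
    (h : Fin (p + 1) → Fin (p + 1) → B) (hsymm : ∀ s t, h s t = h t s) :
    ∑ s, L' s (∑ t, L t (h s t)) = ∑ s, h s s := by
  have h1 : ∑ s, L' s (∑ t, L t (h s t)) = ∑ s, ∑ t, L' s (L t (h s t)) := by
    simp only [map_sum]
  have h2 : ∑ s, ∑ t, L' s (L t (h s t)) = ∑ s, ∑ t, L' t (L s (h s t)) := by
    rw [Finset.sum_comm]
    refine Finset.sum_congr rfl fun s _ => Finset.sum_congr rfl fun t _ => ?_
    rw [hsymm t s]
  have h3 : (2 : ℝ) • ∑ s, ∑ t, L' s (L t (h s t)) = (2 : ℝ) • ∑ s, h s s := by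
    rw [two_smul]
    nth_rewrite 2 [h2]
    rw [← Finset.sum_add_distrib, Finset.smul_sum]
    refine Finset.sum_congr rfl fun s _ => ?_
    rw [← Finset.sum_add_distrib]
    simp only [hL]
    simp
  rw [h1]
  exact smul_right_injective B (two_ne_zero (α := ℝ)) h3

theorem ibp_symm {V B : Type*} [NormedAddCommGroup V] [NormedSpace ℝ V]
    [FiniteDimensional ℝ V] [MeasurableSpace V] [BorelSpace V] (μ : Measure V) [μ.IsAddHaarMeasure]
    [NormedAddCommGroup B] [NormedSpace ℝ B] 
    (φ : V → ℝ) (hφ : ContDiff ℝ ∞ φ) (hφc : HasCompactSupport φ)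
    (F : V → B) (hF : ContDiff ℝ 1 F) (a b : V) :
    ∫ y, fderiv ℝ φ y a • fderiv ℝ F y b ∂μ = ∫ y, fderiv ℝ φ y b • fderiv ℝ F y a ∂μ := by
  have hd : ∀ v : V, ContDiff ℝ ∞ (fun y => fderiv ℝ φ y v) := fun v =>
    (hφ.fderiv_right (m := ∞) (by simp)).clm_apply contDiff_const
  have hs : ∀ v : V, HasCompactSupport (fun y => fderiv ℝ φ y v) := fun v => hφc.fderiv_apply ℝ v
  have cF : ∀ v : V, Continuous (fun y => fderiv ℝ F y v) := fun v =>
    (hF.continuous_fderiv (by simp)).clm_apply continuous_const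
  have key : ∀ a b : V, ∫ y, fderiv ℝ φ y a • fderiv ℝ F y b ∂μ =
      - ∫ y, fderiv ℝ (fun y => fderiv ℝ φ y a) y b • F y ∂μ := by
    intro a b
    refine integral_smul_fderiv_eq_neg_fderiv_smul_of_integrable ?_ ?_ ?_ ?_ ?_
    · refine Continuous.integrable_of_hasCompactSupport ?_ ?_
      · exact (((hd a).continuous_fderiv (by simp)).clm_apply continuous_const).smul hF.continuous
      · exact ((hs a).fderiv_apply ℝ b).smul_right
    · refine Continuous.integrable_of_hasCompactSupport ?_ (hs a).smul_right
      exact (hd a).continuous.smul (cF b)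
    · refine Continuous.integrable_of_hasCompactSupport ?_ (hs a).smul_right
      exact (hd a).continuous.smul hF.continuous
    · intro x _; exact (hd a).differentiable (by simp) x
    · intro x _; exact hF.differentiable (by simp) x
  rw [key a b, key b a]
  congr 1
  refine integral_congr_ae (Eventually.of_forall fun y => ?_)
  simp only
  congr 1
  have hsym : IsSymmSndFDerivAt ℝ φ y := (hφ.contDiffAt).isSymmSndFDerivAt
    (by simp only [minSmoothness_of_isRCLikeNormedField]; exact WithTop.coe_le_coe.2 le_top)
  have hdd : DifferentiableAt ℝ (fderiv ℝ φ) y :=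
    (hφ.fderiv_right (m := ∞) (by simp)).differentiable (by simp) y
  have e : ∀ a b : V, fderiv ℝ (fun y => fderiv ℝ φ y a) y b = fderiv ℝ (fderiv ℝ φ) y b a := by
    intro a b
    rw [fderiv_clm_apply hdd (differentiableAt_const a)]
    simp
  rw [e, e]
  exact hsym b a

theorem weak_harm {B : Type*} [NormedAddCommGroup B] [NormedSpace ℝ B] [CompleteSpace B] (p : ℕ)
    (μ : Measure ((Fin (p + 1) → ℝ) × ℝ)) [μ.IsAddHaarMeasure]
    (L L' : Fin (p + 1) → B →L[ℝ] B)
    (hL : ∀ s t b, L' s (L t b) + L' t (L s b) = if s = t then (2 : ℝ) • b else 0)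
    (F₁ F₂ : (Fin (p + 1) → ℝ) × ℝ → B) (hF₁ : ContDiff ℝ 1 F₁) (hF₂ : ContDiff ℝ 1 F₂)
    (U : Set ((Fin (p + 1) → ℝ) × ℝ))
    (hC1 : ∀ z ∈ U, ∑ s, L s (fderiv ℝ F₁ z (eR p (some s))) = fderiv ℝ F₂ z (eR p none))
    (hC2 : ∀ z ∈ U, ∑ s, L' s (fderiv ℝ F₂ z (eR p (some s))) = - fderiv ℝ F₁ z (eR p none))
    (φ : (Fin (p + 1) → ℝ) × ℝ → ℝ) (hφ : ContDiff ℝ ∞ φ) (hφc : HasCompactSupport φ)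
    (hφU : tsupport φ ⊆ U) :
    ∑ i, ∫ y, fderiv ℝ φ y (eR p i) • fderiv ℝ F₁ y (eR p i) ∂μ = 0 := by
  have hintg : ∀ (F : (Fin (p + 1) → ℝ) × ℝ → B), ContDiff ℝ 1 F → ∀ a b,
      Integrable (fun y => fderiv ℝ φ y a • fderiv ℝ F y b) μ := by
    intro F hF a b
    refine Continuous.integrable_of_hasCompactSupport ?_ (hφc.fderiv_apply ℝ a).smul_right
    exact ((hφ.continuous_fderiv (by simp)).clm_apply continuous_const).smul
      ((hF.continuous_fderiv (by simp)).clm_apply continuous_const)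
  have hz : ∀ y, y ∉ U → fderiv ℝ φ y = 0 := by
    intro y hy
    by_contra h
    exact hy (hφU (support_fderiv_subset ℝ h))
  have pull : ∀ (M : Fin (p + 1) → B →L[ℝ] B) (F : (Fin (p + 1) → ℝ) × ℝ → B), ContDiff ℝ 1 F → ∀ a,
      ∫ y, fderiv ℝ φ y a • ∑ s, M s (fderiv ℝ F y (eR p (some s))) ∂μ =
      ∑ s, M s (∫ y, fderiv ℝ φ y a • fderiv ℝ F y (eR p (some s)) ∂μ) := by
    intro M F hF a
    have hpt : ∀ y, fderiv ℝ φ y a • ∑ s, M s (fderiv ℝ F y (eR p (some s))) =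
        ∑ s, M s (fderiv ℝ φ y a • fderiv ℝ F y (eR p (some s))) := by
      intro y
      rw [Finset.smul_sum]
      exact Finset.sum_congr rfl fun s _ => ((M s).map_smul _ _).symm
    simp_rw [hpt]
    rw [integral_finsetSum]
    · refine Finset.sum_congr rfl fun s _ => ?_
      exact (M s).integral_comp_comm (hintg F hF _ _)
    · intro s _
      exact (M s).integrable_comp (hintg F hF _ _)
  rw [Fintype.sum_option]
  have e1 : ∫ y, fderiv ℝ φ y (eR p none) • fderiv ℝ F₁ y (eR p none) ∂μ =
      - ∑ s, L' s (∫ y, fderiv ℝ φ y (eR p none) • fderiv ℝ F₂ y (eR p (some s)) ∂μ) := by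
    rw [← pull L' F₂ hF₂, ← integral_neg]
    refine integral_congr_ae (Eventually.of_forall fun y => ?_)
    by_cases hy : y ∈ U
    · simp only [hC2 y hy]; simp
    · simp [hz y hy]
  have e2 : ∀ s, ∫ y, fderiv ℝ φ y (eR p none) • fderiv ℝ F₂ y (eR p (some s)) ∂μ =
      ∑ t, L t (∫ y, fderiv ℝ φ y (eR p (some s)) • fderiv ℝ F₁ y (eR p (some t)) ∂μ) := by
    intro s
    rw [ibp_symm μ φ hφ hφc F₂ hF₂, ← pull L F₁ hF₁]
    refine integral_congr_ae (Eventually.of_forall fun y => ?_)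
    by_cases hy : y ∈ U
    · simp only [hC1 y hy]
    · simp [hz y hy]
  rw [e1]
  simp_rw [e2]
  rw [sum_clifford L L' hL _ (fun s t => ibp_symm μ φ hφ hφc F₁ hF₁ _ _)]
  simp

theorem split_vec {B : Type*} [NormedAddCommGroup B] [NormedSpace ℝ B] [FiniteDimensional ℝ B] (p : ℕ)
    (L L' : Fin (p + 1) → B →L[ℝ] B)
    (hL : ∀ s t b, L' s (L t b) + L' t (L s b) = if s = t then (2 : ℝ) • b else 0)
    (D : Set ((Fin (p + 1) → ℝ) × ℝ)) (hD : IsOpen D)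
    (F₁ F₂ : (Fin (p + 1) → ℝ) × ℝ → B) (hF₁ : ContDiffOn ℝ 1 F₁ D) (hF₂ : ContDiffOn ℝ 1 F₂ D)
    (hC1 : ∀ z ∈ D, ∑ s, L s (fderiv ℝ F₁ z (eR p (some s))) = fderiv ℝ F₂ z (eR p none))
    (hC2 : ∀ z ∈ D, ∑ s, L' s (fderiv ℝ F₂ z (eR p (some s))) = - fderiv ℝ F₁ z (eR p none))
    (z0 : (Fin (p + 1) → ℝ) × ℝ) (hz0 : z0 ∈ D) :
    ∃ g₁ g₂ : (Fin (p + 1) → ℝ) × ℝ → B, AnalyticAt ℝ g₁ (z0.1, 0) ∧ AnalyticAt ℝ g₂ (z0.1, 0) ∧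
      ∀ᶠ z in 𝓝 (z0.1, (0 : ℝ)), F₁ (z.1, z0.2 + z.2) = g₁ (z.1, z.2 ^ 2) + z.2 • g₂ (z.1, z.2 ^ 2) := by
  have : CompleteSpace B := FiniteDimensional.complete ℝ B
  obtain ⟨δ, hδ, hδD⟩ := Metric.isOpen_iff.1 hD z0 hz0
  set R := δ / 6 with hR
  have hR0 : 0 < R := by positivity
  let χ : ContDiffBump z0 := ⟨2 * R, 4 * R, by positivity, by linarith⟩
  have hχt : tsupport (χ : _ → ℝ) ⊆ D := by
    rw [χ.tsupport_eq]
    refine (closedBall_subset_ball ?_).trans hδD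
    show 4 * R < δ
    rw [hR]; linarith
  have hglob : ∀ F : (Fin (p + 1) → ℝ) × ℝ → B, ContDiffOn ℝ 1 F D → ContDiff ℝ 1 (fun z => χ z • F z) := by
    intro F hF
    rw [contDiff_iff_contDiffAt]
    intro z
    by_cases hz : z ∈ tsupport (χ : _ → ℝ)
    · exact χ.contDiff.contDiffAt.smul (hF.contDiffAt (hD.mem_nhds (hχt hz)))
    · have : (fun z => χ z • F z) =ᶠ[𝓝 z] fun _ => 0 := by
        filter_upwards [(isClosed_tsupport _).isOpen_compl.mem_nhds hz] with y hy
        rw [image_eq_zero_of_notMem_tsupport hy, zero_smul]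
      exact contDiffAt_const.congr_of_eventuallyEq this
  have hloc : ∀ F : (Fin (p + 1) → ℝ) × ℝ → B, ∀ z ∈ ball z0 (2 * R), (fun z => χ z • F z) =ᶠ[𝓝 z] F := by
    intro F z hz
    filter_upwards [isOpen_ball.mem_nhds hz] with y hy
    rw [χ.one_of_mem_closedBall (ball_subset_closedBall hy), one_smul]
  have hball : ball z0 (2 * R) ⊆ D := (ball_subset_ball (by rw [hR]; linarith)).trans hδD
  let μ : Measure ((Fin (p + 1) → ℝ) × ℝ) := Measure.addHaar
  set F := fun z => χ z • F₁ z with hFdef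
  have hFC : ContDiff ℝ 1 F := hglob F₁ hF₁
  have hw := fun φ hφ hφc hφU => weak_harm p μ L L' hL F (fun z => χ z • F₂ z) hFC (hglob F₂ hF₂)
    (ball z0 (2 * R))
    (fun z hz => by rw [(hloc F₁ z hz).fderiv_eq, (hloc F₂ z hz).fderiv_eq]; exact hC1 z (hball hz))
    (fun z hz => by rw [(hloc F₁ z hz).fderiv_eq, (hloc F₂ z hz).fderiv_eq]; exact hC2 z (hball hz))
    φ hφ hφc hφU
  have hsc : ∀ ℓ : B →L[ℝ] ℝ, ∃ g₁ g₂ : (Fin (p + 1) → ℝ) × ℝ → ℝ, AnalyticAt ℝ g₁ (z0.1, 0) ∧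
      AnalyticAt ℝ g₂ (z0.1, 0) ∧
      ∀ᶠ z in 𝓝 (z0.1, (0 : ℝ)), ℓ (F (z.1, z0.2 + z.2)) = g₁ (z.1, z.2 ^ 2) + z.2 * g₂ (z.1, z.2 ^ 2) := by
    intro ℓ
    refine real_split p μ (fun z => ℓ (F z)) (ℓ.contDiff.comp hFC) z0 R hR0 ?_
    intro φ hφ hφc hφU
    have hintg : ∀ a b, Integrable (fun y => fderiv ℝ φ y a • fderiv ℝ F y b) μ := by
      intro a b
      refine Continuous.integrable_of_hasCompactSupport ?_ (hφc.fderiv_apply ℝ a).smul_right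
      exact ((hφ.continuous_fderiv (by simp)).clm_apply continuous_const).smul
        ((hFC.continuous_fderiv (by simp)).clm_apply continuous_const)
    have h1 := congrArg ℓ (hw φ hφ hφc hφU)
    rw [map_zero, map_sum] at h1
    rw [← h1]
    simp_rw [← fun i => ℓ.integral_comp_comm (hintg (eR p i) (eR p i))]
    rw [← integral_finsetSum _ (fun i _ => ℓ.integrable_comp (hintg _ _))]
    refine integral_congr_ae (Eventually.of_forall fun y => Finset.sum_congr rfl fun i _ => ?_)
    have h2 : fderiv ℝ (fun z => ℓ (F z)) y = ℓ.comp (fderiv ℝ F y) :=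
      (ℓ.hasFDerivAt.comp y (hFC.differentiable (by simp) y).hasFDerivAt).fderiv
    rw [h2, map_smul]
    simp [mul_comm]
  let b := Module.finBasis ℝ B
  choose g₁ g₂ hg₁ hg₂ hg using fun i => hsc (LinearMap.toContinuousLinearMap (b.coord i))
  refine ⟨fun z => ∑ i, g₁ i z • b i, fun z => ∑ i, g₂ i z • b i,
    Finset.univ.analyticAt_fun_sum fun i _ => (hg₁ i).fun_smul analyticAt_const,
    Finset.univ.analyticAt_fun_sum fun i _ => (hg₂ i).fun_smul analyticAt_const, ?_⟩
  have hev : ∀ᶠ z : (Fin (p + 1) → ℝ) × ℝ in 𝓝 (z0.1, (0 : ℝ)), F (z.1, z0.2 + z.2) = F₁ (z.1, z0.2 + z.2) := by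
    have hc : Continuous (fun z : (Fin (p + 1) → ℝ) × ℝ => (z.1, z0.2 + z.2)) := by fun_prop
    have h3 := hloc F₁ z0 (mem_ball_self (by positivity))
    have h4 : Tendsto (fun z : (Fin (p + 1) → ℝ) × ℝ => (z.1, z0.2 + z.2)) (𝓝 (z0.1, (0:ℝ))) (𝓝 z0) := by
      have := hc.tendsto (z0.1, (0:ℝ))
      simpa using this
    exact h4.eventually h3
  filter_upwards [hev, eventually_all.2 hg] with z hz1 hz2
  rw [← hz1, ← b.sum_repr (F (z.1, z0.2 + z.2)), Finset.smul_sum, ← Finset.sum_add_distrib]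
  refine Finset.sum_congr rfl fun i _ => ?_
  have h5 := hz2 i
  have h6 : (b.repr (F (z.1, z0.2 + z.2))) i = g₁ i (z.1, z.2 ^ 2) + z.2 * g₂ i (z.1, z.2 ^ 2) := h5
  rw [h6, add_smul, mul_smul]

theorem analytic_of_split {B : Type*} [NormedAddCommGroup B] [NormedSpace ℝ B] {p : ℕ}
    {F₁ : (Fin (p + 1) → ℝ) × ℝ → B} {z0 : (Fin (p + 1) → ℝ) × ℝ}
    (h : ∃ g₁ g₂ : (Fin (p + 1) → ℝ) × ℝ → B, AnalyticAt ℝ g₁ (z0.1, 0) ∧ AnalyticAt ℝ g₂ (z0.1, 0) ∧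
      ∀ᶠ z in 𝓝 (z0.1, (0 : ℝ)), F₁ (z.1, z0.2 + z.2) = g₁ (z.1, z.2 ^ 2) + z.2 • g₂ (z.1, z.2 ^ 2)) :
    AnalyticAt ℝ F₁ z0 := by
  obtain ⟨g₁, g₂, hg₁, hg₂, hev⟩ := h
  have hr : AnalyticAt ℝ (fun z : (Fin (p + 1) → ℝ) × ℝ => z.2 - z0.2) z0 := analyticAt_snd.fun_sub analyticAt_const
  have hm : AnalyticAt ℝ (fun z : (Fin (p + 1) → ℝ) × ℝ => (z.1, (z.2 - z0.2) ^ 2)) z0 :=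
    AnalyticAt.prod analyticAt_fst (hr.fun_pow 2)
  have h1 := AnalyticAt.fun_comp (g := g₁) (f := fun z : (Fin (p + 1) → ℝ) × ℝ => (z.1, (z.2 - z0.2) ^ 2))
    (x := z0) (by simpa using hg₁) hm
  have h2 := AnalyticAt.fun_comp (g := g₂) (f := fun z : (Fin (p + 1) → ℝ) × ℝ => (z.1, (z.2 - z0.2) ^ 2))
    (x := z0) (by simpa using hg₂) hm
  refine (h1.fun_add (hr.fun_smul h2)).congr ?_
  have hc : Continuous (fun z : (Fin (p + 1) → ℝ) × ℝ => (z.1, z.2 - z0.2)) := by fun_prop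
  have h4 : Tendsto (fun z : (Fin (p + 1) → ℝ) × ℝ => (z.1, z.2 - z0.2)) (𝓝 z0) (𝓝 (z0.1, (0:ℝ))) := by
    have := hc.tendsto z0
    simpa using this
  filter_upwards [h4.eventually hev] with z hz
  simpa using hz.symm
end WeakHarm

section Final
open MeasureTheory Metric
open scoped ContDiff

theorem strong_lap {B : Type*} [NormedAddCommGroup B] [NormedSpace ℝ B] (p : ℕ)
    (L L' : Fin (p + 1) → B →L[ℝ] B)
    (hL : ∀ s t b, L' s (L t b) + L' t (L s b) = if s = t then (2 : ℝ) • b else 0)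
    (D : Set ((Fin (p + 1) → ℝ) × ℝ)) (hD : IsOpen D)
    (F₁ F₂ : (Fin (p + 1) → ℝ) × ℝ → B)
    (z : (Fin (p + 1) → ℝ) × ℝ) (hz : z ∈ D) (hF₁ : ContDiffAt ℝ ∞ F₁ z) (hF₂ : ContDiffAt ℝ ∞ F₂ z)
    (hC1 : ∀ z ∈ D, ∑ s, L s (fderiv ℝ F₁ z (eR p (some s))) = fderiv ℝ F₂ z (eR p none))
    (hC2 : ∀ z ∈ D, ∑ s, L' s (fderiv ℝ F₂ z (eR p (some s))) = - fderiv ℝ F₁ z (eR p none)) :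
    (∑ s, fderiv ℝ (fun y => fderiv ℝ F₁ y (eR p (some s))) z (eR p (some s))) +
      fderiv ℝ (fun y => fderiv ℝ F₁ y (eR p none)) z (eR p none) = 0 := by
  have two : (2 : WithTop ℕ∞) ≤ ∞ := WithTop.coe_le_coe.2 le_top
  have hdd : ∀ F : (Fin (p + 1) → ℝ) × ℝ → B, ContDiffAt ℝ ∞ F z → ∀ a : (Fin (p + 1) → ℝ) × ℝ,
      HasFDerivAt (fun y => fderiv ℝ F y a) ((fderiv ℝ (fderiv ℝ F) z).flip a) z := by
    intro F hF a
    have h1 : DifferentiableAt ℝ (fderiv ℝ F) z :=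
      (hF.fderiv_right (m := ∞) (by simp)).differentiableAt (by simp)
    have := h1.hasFDerivAt.clm_apply (hasFDerivAt_const a z)
    rw [ContinuousLinearMap.comp_zero, zero_add] at this
    exact this
  have hsym : ∀ F : (Fin (p + 1) → ℝ) × ℝ → B, ContDiffAt ℝ ∞ F z → ∀ a b,
      fderiv ℝ (fderiv ℝ F) z a b = fderiv ℝ (fderiv ℝ F) z b a := by
    intro F hF a b
    have : IsSymmSndFDerivAt ℝ F z := hF.isSymmSndFDerivAt
      (by simp only [minSmoothness_of_isRCLikeNormedField]; exact two)
    exact this a b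
  set T₁ := fderiv ℝ (fderiv ℝ F₁) z with hT₁
  set T₂ := fderiv ℝ (fderiv ℝ F₂) z with hT₂
  have hsum : ∀ (M : Fin (p + 1) → B →L[ℝ] B) (F : (Fin (p + 1) → ℝ) × ℝ → B), ContDiffAt ℝ ∞ F z →
      ∀ b, fderiv ℝ (fun y => ∑ s, M s (fderiv ℝ F y (eR p (some s)))) z b =
        ∑ s, M s (fderiv ℝ (fderiv ℝ F) z b (eR p (some s))) := by
    intro M F hF b
    have h1 : HasFDerivAt (fun y => ∑ s, M s (fderiv ℝ F y (eR p (some s))))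
        (∑ s, (M s).comp ((fderiv ℝ (fderiv ℝ F) z).flip (eR p (some s)))) z :=
      HasFDerivAt.fun_sum fun s _ => (M s).hasFDerivAt.comp z (hdd F hF _)
    rw [h1.fderiv]
    simp
  have E1 : ∀ b, ∑ s, L s (T₁ b (eR p (some s))) = T₂ b (eR p none) := by
    intro b
    rw [hT₁, ← hsum L F₁ hF₁ b]
    have : (fun y => ∑ s, L s (fderiv ℝ F₁ y (eR p (some s)))) =ᶠ[𝓝 z] fun y => fderiv ℝ F₂ y (eR p none) := by
      filter_upwards [hD.mem_nhds hz] with y hy using hC1 y hy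
    rw [this.fderiv_eq, (hdd F₂ hF₂ _).fderiv]
    rfl
  have E2 : ∀ b, ∑ s, L' s (T₂ b (eR p (some s))) = - T₁ b (eR p none) := by
    intro b
    rw [hT₂, ← hsum L' F₂ hF₂ b]
    have : (fun y => ∑ s, L' s (fderiv ℝ F₂ y (eR p (some s)))) =ᶠ[𝓝 z] fun y => - fderiv ℝ F₁ y (eR p none) := by
      filter_upwards [hD.mem_nhds hz] with y hy using hC2 y hy
    rw [this.fderiv_eq, (hdd F₁ hF₁ _).fun_neg.fderiv]
    rfl
  have E3 : T₁ (eR p none) (eR p none) = - ∑ s, T₁ (eR p (some s)) (eR p (some s)) := by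
    rw [← sum_clifford L L' hL (fun s t => T₁ (eR p (some s)) (eR p (some t)))
      (fun s t => hsym F₁ hF₁ _ _)]
    simp only [E1]
    rw [← neg_eq_iff_eq_neg, ← E2]
    refine Finset.sum_congr rfl fun s _ => ?_
    rw [hT₂, hsym F₂ hF₂]
  simp only [fun a => (hdd F₁ hF₁ a).fderiv]
  show (∑ s, T₁ (eR p (some s)) (eR p (some s))) + T₁ (eR p none) (eR p none) = 0
  rw [E3]; simp

theorem alg_facts {A : Type*} [NormedAddCommGroup A] [NormedSpace ℝ A] [Mul A] [One A]
    (conj : A → A) (H : IsAltStarAlg A conj) : ∃ L : A → A →L[ℝ] A, (∀ a b, L a b = a * b) ∧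
      (∀ a b c, L (a + b) c = L a c + L b c) ∧ (∀ (r : ℝ) a c, L (r • a) c = r • L a c) ∧
      (∀ a b, L (-a) b = - L a b) ∧ ∀ a b c, L a (L b c) + L b (L a c) = L (a * b + b * a) c := by
  haveI := H.finDim
  let L : A → A →L[ℝ] A := fun a => LinearMap.toContinuousLinearMap
    { toFun := fun b => a * b, map_add' := H.mul_add' a, map_smul' := fun r b => H.mul_smul' r a b }
  have hL : ∀ a b, L a b = a * b := fun a b => rfl
  have hadd : ∀ a b c, L (a + b) c = L a c + L b c := fun a b c => H.add_mul' a b c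
  have hsm : ∀ (r : ℝ) a c, L (r • a) c = r • L a c := fun r a c => H.smul_mul' r a c
  refine ⟨L, hL, hadd, hsm, ?_, ?_⟩
  · intro a b
    have := hsm (-1) a b
    simpa using this
  · intro a b c
    have h := H.alt_left (a + b) c
    rw [H.add_mul', H.add_mul' a b c, H.mul_add', H.mul_add', H.add_mul' a b (a + b), H.mul_add' a,
      H.mul_add' b, H.add_mul', H.add_mul', H.add_mul', H.alt_left a c, H.alt_left b c] at h
    simp only [hL]
    rw [H.add_mul']
    have h' := sub_eq_zero.2 h
    rw [← sub_eq_zero, ← h']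
    abel

theorem v_sq {A : Type*} [NormedAddCommGroup A] [NormedSpace ℝ A] [Mul A] [One A]
    (conj : A → A) (H : IsAltStarAlg A conj) (v : ℕ → A) (m : ℕ) (hv : IsHypBasis A conj v m)
    (s : ℕ) (h1 : 1 ≤ s) (h2 : s ≤ m) : v s * v s = -1 := by
  obtain ⟨L, hL, -⟩ := alg_facts conj H
  have h3 := hv.trace_zero s h1 h2
  have h4 := hv.norm_one s h1 h2
  have h5 : conj (v s) = - v s := by rw [eq_neg_iff_add_eq_zero, add_comm]; exact h3
  rw [h5, ← hL, map_neg, hL] at h4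
  rw [← h4, neg_neg]

theorem v_anti {A : Type*} [NormedAddCommGroup A] [NormedSpace ℝ A] [Mul A] [One A]
    (conj : A → A) (H : IsAltStarAlg A conj) (v : ℕ → A) (m : ℕ) (hv : IsHypBasis A conj v m)
    (s t : ℕ) (h1 : 1 ≤ s) (h2 : s ≤ m) (h3 : 1 ≤ t) (h4 : t ≤ m) :
    v s * v t + v t * v s = if s = t then (-2 : ℝ) • (1 : A) else 0 := by
  split_ifs with h
  · subst h
    rw [v_sq conj H v m hv s h1 h2, neg_smul, two_smul]; abel
  · rw [hv.anticomm s t h1 h2 h3 h4 h]; simp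

theorem emb_mul {A : Type*} [NormedAddCommGroup A] [NormedSpace ℝ A] [Mul A] [One A]
    (conj : A → A) (H : IsAltStarAlg A conj) (v : ℕ → A) (m : ℕ) (w : Fin (m + 1) → ℝ) (b : A) :
    emb v m w * b = ∑ s : Fin (m + 1), w s • (v s * b) := by
  let R : A →ₗ[ℝ] A :=
    { toFun := fun a => a * b, map_add' := fun a c => H.add_mul' a c b, map_smul' := fun r a => H.smul_mul' r a b }
  show R (emb v m w) = ∑ s : Fin (m + 1), w s • R (v s)
  simp [emb]

theorem emb_sq {A : Type*} [NormedAddCommGroup A] [NormedSpace ℝ A] [Mul A] [One A]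
    (conj : A → A) (H : IsAltStarAlg A conj) (v : ℕ → A) (m p : ℕ) (hv : IsHypBasis A conj v m)
    (w : Fin (m + 1) → ℝ) (hw : ∀ s : Fin (m + 1), (s : ℕ) ≤ p → w s = 0) :
    emb v m w * emb v m w = (-(∑ s, w s ^ 2)) • (1 : A) := by
  obtain ⟨L, hL, -⟩ := alg_facts conj H
  have h1 : emb v m w * emb v m w = ∑ s : Fin (m + 1), ∑ t : Fin (m + 1), (w s * w t) • (v s * v t) := by
    rw [emb_mul conj H]
    refine Finset.sum_congr rfl fun s _ => ?_
    rw [← hL, emb, map_sum, Finset.smul_sum]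
    refine Finset.sum_congr rfl fun t _ => ?_
    rw [map_smul, smul_smul, hL]
  have h2 : ∑ s : Fin (m + 1), ∑ t : Fin (m + 1), (w s * w t) • (v s * v t) =
      ∑ s : Fin (m + 1), ∑ t : Fin (m + 1), (w s * w t) • (v t * v s) := by
    rw [Finset.sum_comm]
    refine Finset.sum_congr rfl fun s _ => Finset.sum_congr rfl fun t _ => by rw [mul_comm]
  have h3 : (2 : ℝ) • (emb v m w * emb v m w) = (2 : ℝ) • ((-(∑ s, w s ^ 2)) • (1 : A)) := by
    rw [h1, two_smul]
    nth_rewrite 2 [h2]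
    rw [← Finset.sum_add_distrib, smul_smul, mul_neg, neg_smul, Finset.mul_sum, Finset.sum_smul, ← Finset.sum_neg_distrib]
    refine Finset.sum_congr rfl fun s _ => ?_
    rw [← Finset.sum_add_distrib]
    have h4 : ∀ t : Fin (m + 1), (w s * w t) • (v s * v t) + (w s * w t) • (v t * v s) =
        if s = t then -((2 * w s ^ 2) • (1 : A)) else 0 := by
      intro t
      rw [← smul_add]
      by_cases hs : (s : ℕ) ≤ p
      · simp [hw s hs]
      · by_cases ht : (t : ℕ) ≤ p
        · rw [hw t ht, mul_zero, zero_smul, if_neg]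
          rintro rfl; exact hs ht
        · rw [v_anti conj H v m hv s t (by omega) (by omega) (by omega) (by omega)]
          by_cases hst : s = t
          · subst hst
            simp only [if_true, smul_smul]
            rw [← neg_smul]; congr 1; ring
          · have : (s : ℕ) ≠ t := fun h => hst (Fin.ext h)
            simp [hst, this]
    simp [h4]
  exact smul_right_injective A (two_ne_zero (α := ℝ)) h3

theorem Sph_iff {A : Type*} [NormedAddCommGroup A] [NormedSpace ℝ A] [Mul A] [One A]
    (conj : A → A) (H : IsAltStarAlg A conj) (v : ℕ → A) (m p : ℕ) (hv : IsHypBasis A conj v m)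
    (w : Fin (m + 1) → ℝ) :
    w ∈ Sph v m p ↔ (∀ s : Fin (m + 1), (s : ℕ) ≤ p → w s = 0) ∧ ∑ s, w s ^ 2 = 1 := by
  have hone : (1 : A) ≠ 0 := by
    have := hv.indep.ne_zero 0
    simpa [hv.v_zero] using this
  refine and_congr_right fun hw => ?_
  rw [emb_sq conj H v m p hv w hw, ← neg_one_smul ℝ (1 : A)]
  constructor
  · intro h
    have := smul_left_injective ℝ hone h
    linarith
  · intro h; rw [h]

theorem exists_dir {A : Type*} [NormedAddCommGroup A] [NormedSpace ℝ A] [Mul A] [One A]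
    (conj : A → A) (H : IsAltStarAlg A conj) (v : ℕ → A) (m p : ℕ) (hp : p < m) (hv : IsHypBasis A conj v m)
    (x : Fin (m + 1) → ℝ) : ∃ w ∈ Sph v m p, xqpart m p x = rad m p x • w ∧
      x = pt m p w (projP m p x) (rad m p x) := by
  suffices h : ∃ w ∈ Sph v m p, xqpart m p x = rad m p x • w by
    obtain ⟨w, hw, h⟩ := h
    refine ⟨w, hw, h, ?_⟩
    rw [pt, ← h]
    ext s
    by_cases hs : (s : ℕ) ≤ p
    · simp [injP, xqpart, projP, hs, Nat.lt_succ_of_le hs]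
      intro h; exact absurd s.isLt (by omega)
    · simp [injP, xqpart, hs, show ¬ (s : ℕ) < p + 1 by omega]
  have hnn : 0 ≤ ∑ s, (xqpart m p x s) ^ 2 := Finset.sum_nonneg fun s _ => sq_nonneg _
  by_cases hr : rad m p x = 0
  · refine ⟨Pi.single (Fin.last m) 1, (Sph_iff conj H v m p hv _).2 ⟨?_, ?_⟩, ?_⟩
    · intro s hs
      rw [Pi.single_apply, if_neg]
      rintro rfl
      simp at hs; omega
    · simp [Pi.single_apply]
    · rw [hr, zero_smul]
      rw [rad, Real.sqrt_eq_zero hnn] at hr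
      ext s
      have := (Finset.sum_eq_zero_iff_of_nonneg (fun s _ => sq_nonneg _)).1 hr s (Finset.mem_univ s)
      simpa using this
  · refine ⟨(rad m p x)⁻¹ • xqpart m p x, (Sph_iff conj H v m p hv _).2 ⟨?_, ?_⟩, ?_⟩
    · intro s hs; simp [xqpart, hs]
    · simp only [Pi.smul_apply, smul_eq_mul, mul_pow, ← Finset.mul_sum]
      have : ∑ s, (xqpart m p x s) ^ 2 = rad m p x ^ 2 := by rw [rad, Real.sq_sqrt hnn]
      rw [this, ← mul_pow, inv_mul_cancel₀ hr, one_pow]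
    · rw [smul_smul, mul_inv_cancel₀ hr, one_smul]

theorem xq_pt (m p : ℕ) (hp : p < m) (w : Fin (m + 1) → ℝ) (hw : ∀ s : Fin (m + 1), (s : ℕ) ≤ p → w s = 0)
    (y : Fin (p + 1) → ℝ) (r : ℝ) :
    xqpart m p (pt m p w y r) = r • w ∧ projP m p (pt m p w y r) = y := by
  constructor
  · ext s
    by_cases hs : (s : ℕ) ≤ p
    · simp [xqpart, hs, hw s hs]
    · simp [xqpart, pt, injP, hs, show ¬ (s : ℕ) < p + 1 by omega]
  · ext s
    have h1 : (s : ℕ) < m + 1 := by omega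
    have h2 := hw ⟨s, h1⟩ (by simp; omega)
    simp [projP, pt, injP, h1, h2]
    intro h; exact absurd s.isLt (by omega)

end Final

section Fin2
open MeasureTheory Metric
open scoped ContDiff

theorem analytic_xq (m p : ℕ) (s : Fin (m + 1)) (x : Fin (m + 1) → ℝ) :
    AnalyticAt ℝ (fun y => xqpart m p y s) x := by
  unfold xqpart
  by_cases hs : (s : ℕ) ≤ p
  · simp only [hs, if_true]; exact analyticAt_const
  · simp only [hs, if_false]
    exact (ContinuousLinearMap.proj (R := ℝ) (φ := fun _ : Fin (m + 1) => ℝ) s).analyticAt x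

theorem analytic_projP (m p : ℕ) (x : Fin (m + 1) → ℝ) :
    AnalyticAt ℝ (fun y => projP m p y) x := by
  refine AnalyticAt.pi fun s => ?_
  unfold projP
  by_cases hs : (s : ℕ) < m + 1
  · simp only [hs, dif_pos]
    exact (ContinuousLinearMap.proj (R := ℝ) (φ := fun _ : Fin (m + 1) => ℝ) ⟨s, hs⟩).analyticAt x
  · simp only [hs, dif_neg, not_false_eq_true]; exact analyticAt_const

theorem analytic_N (m p : ℕ) (x : Fin (m + 1) → ℝ) :
    AnalyticAt ℝ (fun y => ∑ s, (xqpart m p y s) ^ 2) x :=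
  Finset.univ.analyticAt_fun_sum fun s _ => (analytic_xq m p s x).fun_pow 2

theorem rad_sq (m p : ℕ) (x : Fin (m + 1) → ℝ) :
    rad m p x ^ 2 = ∑ s, (xqpart m p x s) ^ 2 :=
  Real.sq_sqrt (Finset.sum_nonneg fun s _ => sq_nonneg _)

theorem analytic_rad (m p : ℕ) (x : Fin (m + 1) → ℝ) (hx : rad m p x ≠ 0) :
    AnalyticAt ℝ (fun y => rad m p y) x := by
  have h0 : (∑ s, (xqpart m p x s) ^ 2) ≠ 0 := by rw [← rad_sq]; exact pow_ne_zero 2 hx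
  have h1 : AnalyticAt ℝ Real.sqrt (∑ s, (xqpart m p x s) ^ 2) :=
    (Real.contDiffAt_sqrt (n := ω) h0).analyticAt
  exact AnalyticAt.fun_comp (g := Real.sqrt) (f := fun y => ∑ s, (xqpart m p y s) ^ 2) h1
    (analytic_N m p x)

theorem continuous_rad (m p : ℕ) (x : Fin (m + 1) → ℝ) :
    ContinuousAt (fun y => (projP m p y, rad m p y)) x := by
  refine (analytic_projP m p x).continuousAt.prodMk ?_
  exact Real.continuous_sqrt.continuousAt.comp (f := fun y => ∑ s, (xqpart m p y s) ^ 2)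
    (analytic_N m p x).continuousAt

theorem f_analytic {A : Type*} [NormedAddCommGroup A] [NormedSpace ℝ A] [Mul A] [One A]
    (conj : A → A) (H : IsAltStarAlg A conj) (v : ℕ → A) (m p : ℕ) (hp : p < m)
    (hv : IsHypBasis A conj v m)
    (D : Set ((Fin (p + 1) → ℝ) × ℝ)) (hD : IsOpen D)
    (F₁ F₂ : (Fin (p + 1) → ℝ) × ℝ → A)
    (f : (Fin (m + 1) → ℝ) → A) (hind : Induced v m p D F₁ F₂ f) (x : Fin (m + 1) → ℝ)
    (hx : (projP m p x, rad m p x) ∈ D) (G K : (Fin (m + 1) → ℝ) → A)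
    (hG : AnalyticAt ℝ G x) (hK : AnalyticAt ℝ K x)
    (hGF : ∀ᶠ y in 𝓝 x, F₁ (projP m p y, rad m p y) = G y)
    (hKF : ∀ᶠ y in 𝓝 x, F₂ (projP m p y, rad m p y) = rad m p y • K y) :
    AnalyticAt ℝ f x := by
  obtain ⟨L, hL, -⟩ := alg_facts conj H
  have h1 : AnalyticAt ℝ (fun y => G y + ∑ s : Fin (m + 1), xqpart m p y s • L (v s) (K y)) x := by
    refine hG.fun_add (Finset.univ.analyticAt_fun_sum fun s _ => (analytic_xq m p s x).fun_smul ?_)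
    exact AnalyticAt.fun_comp (g := L (v s)) (f := K) ((L (v s)).analyticAt _) hK
  refine h1.congr ?_
  have h2 : ∀ᶠ y in 𝓝 x, (projP m p y, rad m p y) ∈ D :=
    (continuous_rad m p x).eventually (hD.mem_nhds hx)
  filter_upwards [h2, hGF, hKF] with y hy hg hk
  obtain ⟨w, hw, hq, hpt⟩ := exists_dir conj H v m p hp hv y
  have h3 := hind w hw _ hy
  rw [← hpt] at h3
  rw [h3, hg, hk, emb_mul conj H]
  congr 1
  refine Finset.sum_congr rfl fun s _ => ?_
  rw [H.mul_smul', smul_smul, hL, hq, Pi.smul_apply, smul_eq_mul, mul_comm]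

end Fin2

/-- For `f = F₁ + ωF₂ ∈ GSR(Ω_D)`: the components `F₁, F₂` are real analytic on `D`,
`f` is real analytic on `Ω_D`, and `Δ_{x'}F₁ = 0`, `Δ_{x'}F₂ = 0` on `D`. -/
theorem gsr_harmonic_components
    {A : Type*} [NormedAddCommGroup A] [NormedSpace ℝ A] [Mul A] [One A]
    (conj : A → A) (H : IsAltStarAlg A conj)
    (v : ℕ → A) (m p : ℕ) (hv : IsHypBasis A conj v m) (hp : p < m)
    (D : Set ((Fin (p + 1) → ℝ) × ℝ)) (hD : IsOpen D)
    (hDrefl : ∀ z ∈ D, reflD p z ∈ D)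
    (F₁ F₂ : (Fin (p + 1) → ℝ) × ℝ → A) (hstem : IsStem p D F₁ F₂)
    (hF₁ : ContDiffOn ℝ 1 F₁ D) (hF₂ : ContDiffOn ℝ 1 F₂ D)
    (f : (Fin (m + 1) → ℝ) → A) (hind : Induced v m p D F₁ F₂ f)
    (hCR : StemCR v p D F₁ F₂) :
    AnalyticOnNhd ℝ F₁ D ∧ AnalyticOnNhd ℝ F₂ D ∧
    AnalyticOnNhd ℝ f (OmegaD v m p D) ∧
    (∀ z ∈ D, lapSx p F₁ z = 0 ∧ lapSx p F₂ z = 0) := by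
  classical
  haveI := H.finDim
  obtain ⟨M, hM, hMadd, hMsm, hMneg, hMM⟩ := alg_facts conj H
  have hM1 : ∀ b, M 1 b = b := fun b => by rw [hM, H.one_mul']
  set L : Fin (p + 1) → A →L[ℝ] A := fun s => M (v s) with hLdef
  set L' : Fin (p + 1) → A →L[ℝ] A := fun s => if s = 0 then M 1 else - M (v s) with hL'def
  have hM2 : ∀ s t : Fin (p + 1), s ≠ 0 → t ≠ 0 → ∀ b,
      M (v s) (M (v t) b) + M (v t) (M (v s) b) = if s = t then (-2 : ℝ) • b else 0 := by
    intro s t hs ht b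
    have hs' : 1 ≤ (s : ℕ) := Nat.one_le_iff_ne_zero.2 fun h => hs (Fin.ext h)
    have ht' : 1 ≤ (t : ℕ) := Nat.one_le_iff_ne_zero.2 fun h => ht (Fin.ext h)
    have h1 := s.isLt
    have h2 := t.isLt
    rw [hMM, v_anti conj H v m hv s t hs' (by omega) ht' (by omega)]
    by_cases hst : s = t
    · rw [if_pos hst, if_pos (by rw [hst]), hMsm, hM1]
    · rw [if_neg hst, if_neg fun h => hst (Fin.ext h)]
      have := hMsm 0 0 b
      simpa using this
  have hcl1 : ∀ s t b, L' s (L t b) + L' t (L s b) = if s = t then (2 : ℝ) • b else 0 := by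
    intro s t b
    by_cases hs : s = 0 <;> by_cases ht : t = 0
    · subst hs; subst ht
      simp [hLdef, hL'def, hv.v_zero, hM1, two_smul]
    · subst hs
      simp [hLdef, hL'def, hv.v_zero, hM1, ht, Ne.symm ht]
    · subst ht
      simp [hLdef, hL'def, hv.v_zero, hM1, hs]
    · have := hM2 s t hs ht b
      simp only [hLdef, hL'def, hs, ht, if_false, ContinuousLinearMap.neg_apply]
      rw [← neg_add, this]
      split_ifs <;> simp
  have hcl2 : ∀ s t b, L s (L' t b) + L t (L' s b) = if s = t then (2 : ℝ) • b else 0 := by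
    intro s t b
    by_cases hs : s = 0 <;> by_cases ht : t = 0
    · subst hs; subst ht
      simp [hLdef, hL'def, hv.v_zero, hM1, two_smul]
    · subst hs
      simp [hLdef, hL'def, hv.v_zero, hM1, ht, Ne.symm ht]
    · subst ht
      simp [hLdef, hL'def, hv.v_zero, hM1, hs]
    · have := hM2 s t hs ht b
      simp only [hLdef, hL'def, hs, ht, if_false, ContinuousLinearMap.neg_apply, map_neg]
      rw [← neg_add, this]
      split_ifs <;> simp
  have hC1 : ∀ z ∈ D, ∑ s, L s (fderiv ℝ F₁ z (eR p (some s))) = fderiv ℝ F₂ z (eR p none) := by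
    intro z hz
    have := sub_eq_zero.1 (hCR z hz).1
    simp only [hLdef, hM]
    exact this
  have hC2 : ∀ z ∈ D, ∑ s, L' s (fderiv ℝ F₂ z (eR p (some s))) =
      - fderiv ℝ F₁ z (eR p none) := by
    intro z hz
    have h1 : DbaropSx v p F₂ z = - fderiv ℝ F₁ z (eR p none) :=
      eq_neg_of_add_eq_zero_left (hCR z hz).2
    rw [← h1, DbaropSx, Fin.sum_univ_succ, Fin.sum_univ_succ]
    simp only [hL'def, if_true, hM1, Fin.succ_ne_zero, if_false, ContinuousLinearMap.neg_apply,
      Finset.sum_neg_distrib, hM]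
    simp [sub_eq_add_neg]
    rfl
  have hC1' : ∀ z ∈ D, ∑ s, L' s (fderiv ℝ F₂ z (eR p (some s))) =
      fderiv ℝ (fun y => - F₁ y) z (eR p none) := by
    intro z hz
    rw [hC2 z hz, fderiv_fun_neg]; rfl
  have hC2' : ∀ z ∈ D, ∑ s, L s (fderiv ℝ (fun y => - F₁ y) z (eR p (some s))) =
      - fderiv ℝ F₂ z (eR p none) := by
    intro z hz
    rw [← hC1 z hz, fderiv_fun_neg]; simp
  have hS1 := split_vec p L L' hcl1 D hD F₁ F₂ hF₁ hF₂ hC1 hC2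
  have hS2 := split_vec p L' L hcl2 D hD F₂ (fun y => - F₁ y) hF₂ hF₁.neg hC1' hC2'
  have hA1 : AnalyticOnNhd ℝ F₁ D := fun z hz => analytic_of_split (hS1 z hz)
  have hA2 : AnalyticOnNhd ℝ F₂ D := fun z hz => analytic_of_split (hS2 z hz)
  refine ⟨hA1, hA2, ?_, ?_⟩
  · rintro x ⟨w, hw, z, hz, rfl⟩
    have hw' := (Sph_iff conj H v m p hv w).1 hw
    obtain ⟨hxq, hpr⟩ := xq_pt m p hp w hw'.1 z.1 z.2
    have hrad : rad m p (pt m p w z.1 z.2) = |z.2| := by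
      rw [rad, hxq, ← Real.sqrt_sq_eq_abs]
      congr 1
      simp only [Pi.smul_apply, smul_eq_mul, mul_pow, ← Finset.mul_sum, hw'.2, mul_one]
    set x := pt m p w z.1 z.2 with hxdef
    have hxD : (projP m p x, rad m p x) ∈ D := by
      rw [hpr, hrad]
      rcases abs_choice z.2 with h | h
      · rw [h]; exact hz
      · rw [h]; exact hDrefl z hz
    by_cases hz2 : z.2 = 0
    · have hr0 : rad m p x = 0 := by rw [hrad, hz2, abs_zero]
      have hzz : ((z.1, 0) : (Fin (p + 1) → ℝ) × ℝ) ∈ D := by rw [← hz2]; exact hz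
      obtain ⟨g₁, g₂, hg₁, hg₂, hg⟩ := hS1 _ hzz
      obtain ⟨k₁, k₂, hk₁, hk₂, hk⟩ := hS2 _ hzz
      simp only [zero_add] at hg₁ hg₂ hg hk₁ hk₂ hk
      have hcr : Tendsto (fun u : (Fin (p + 1) → ℝ) × ℝ => (u.1, -u.2)) (𝓝 (z.1, (0 : ℝ)))
          (𝓝 (z.1, (0 : ℝ))) := by
        have : Continuous (fun u : (Fin (p + 1) → ℝ) × ℝ => (u.1, -u.2)) := by fun_prop
        simpa using this.tendsto (z.1, (0 : ℝ))
      have hDn : ∀ᶠ u in 𝓝 (z.1, (0 : ℝ)), u ∈ D := hD.mem_nhds hzz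
      have e1 : ∀ᶠ u in 𝓝 (z.1, (0 : ℝ)), F₁ u = g₁ (u.1, u.2 ^ 2) := by
        filter_upwards [hDn, hg, hcr.eventually hg] with u hu h1 h2
        have h3 := (hstem u hu).1
        simp only [neg_sq] at h2
        have h4 : F₁ (u.1, -u.2) = F₁ u := h3
        have h1' : F₁ u = g₁ (u.1, u.2 ^ 2) + u.2 • g₂ (u.1, u.2 ^ 2) := h1
        rw [h4, h1'] at h2
        rw [h1']
        have h5 : (2 : ℝ) • (u.2 • g₂ (u.1, u.2 ^ 2)) = 0 := by
          have := add_left_cancel h2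
          rw [two_smul]
          nth_rewrite 1 [this]
          simp
        rw [(smul_eq_zero.1 h5).resolve_left two_ne_zero, add_zero]
      have e2 : ∀ᶠ u in 𝓝 (z.1, (0 : ℝ)), F₂ u = u.2 • k₂ (u.1, u.2 ^ 2) := by
        filter_upwards [hDn, hk, hcr.eventually hk] with u hu h1 h2
        have h3 := (hstem u hu).2
        simp only [neg_sq] at h2
        have h4 : F₂ (u.1, -u.2) = - F₂ u := h3
        have h1' : F₂ u = k₁ (u.1, u.2 ^ 2) + u.2 • k₂ (u.1, u.2 ^ 2) := h1
        rw [h4, h1'] at h2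
        rw [h1']
        have h5 : (2 : ℝ) • k₁ (u.1, u.2 ^ 2) = 0 := by
          rw [neg_add, neg_smul] at h2
          have := add_right_cancel h2
          rw [two_smul]
          nth_rewrite 1 [← this]
          simp
        rw [(smul_eq_zero.1 h5).resolve_left two_ne_zero, zero_add]
      have hct : Tendsto (fun y => (projP m p y, rad m p y)) (𝓝 x) (𝓝 (z.1, (0 : ℝ))) := by
        have := (continuous_rad m p x).tendsto
        simpa only [hpr, hr0] using this
      have hin : AnalyticAt ℝ (fun y => (projP m p y, ∑ s, (xqpart m p y s) ^ 2)) x :=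
        (analytic_projP m p x).prod (analytic_N m p x)
      have hval : (projP m p x, ∑ s, (xqpart m p x s) ^ 2) = (z.1, (0 : ℝ)) := by
        rw [← rad_sq, hr0, hpr]; simp
      refine f_analytic conj H v m p hp hv D hD F₁ F₂ f hind x hxD
        (fun y => g₁ (projP m p y, ∑ s, (xqpart m p y s) ^ 2))
        (fun y => k₂ (projP m p y, ∑ s, (xqpart m p y s) ^ 2)) ?_ ?_ ?_ ?_
      · exact AnalyticAt.fun_comp (g := g₁)
          (f := fun y => (projP m p y, ∑ s, (xqpart m p y s) ^ 2)) (by rw [hval]; exact hg₁) hin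
      · exact AnalyticAt.fun_comp (g := k₂)
          (f := fun y => (projP m p y, ∑ s, (xqpart m p y s) ^ 2)) (by rw [hval]; exact hk₂) hin
      · filter_upwards [hct.eventually e1] with y hy
        rw [hy, rad_sq]
      · filter_upwards [hct.eventually e2] with y hy
        rw [hy, rad_sq]
    · have hr0 : rad m p x ≠ 0 := by rw [hrad]; exact abs_ne_zero.2 hz2
      have hra := analytic_rad m p x hr0
      have hin : AnalyticAt ℝ (fun y => (projP m p y, rad m p y)) x :=
        (analytic_projP m p x).prod hra
      refine f_analytic conj H v m p hp hv D hD F₁ F₂ f hind x hxD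
        (fun y => F₁ (projP m p y, rad m p y))
        (fun y => (rad m p y)⁻¹ • F₂ (projP m p y, rad m p y)) ?_ ?_ ?_ ?_
      · exact AnalyticAt.fun_comp (g := F₁) (f := fun y => (projP m p y, rad m p y))
          (hA1 _ hxD) hin
      · exact (hra.fun_inv hr0).fun_smul (AnalyticAt.fun_comp (g := F₂)
          (f := fun y => (projP m p y, rad m p y)) (hA2 _ hxD) hin)
      · exact Eventually.of_forall fun _ => rfl
      · filter_upwards [hra.continuousAt.eventually_ne hr0] with y hy
        rw [smul_smul, mul_inv_cancel₀ hy, one_smul]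
  · intro z hz
    exact ⟨strong_lap p L L' hcl1 D hD F₁ F₂ z hz (hA1 z hz).contDiffAt (hA2 z hz).contDiffAt hC1 hC2,
      strong_lap p L' L hcl2 D hD F₂ (fun y => - F₁ y) z hz (hA2 z hz).contDiffAt
        (hA1 z hz).contDiffAt.neg hC1' hC2'⟩


end GPSM
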